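/- Uniform total boundedness of clusters in the path metric: For every ε > 0 there exists a function N′_ε : (0,∞) → ℕ such that for all n ∈ ℕ: P( for all δ > 0, all m ∈ ℕ and all Q ∈ 𝒬, N^p_n(δ,m,Q) ≤ N′_ε(δ) ) > 1 − ε. -/

import Mathlib

/-! Why the clusters are uniformly totally bounded in the path metric.

Fix `M` and cut `Λ_n` into cells of side `h = n / M`. The local cluster `Loc V h z` of a site `z`
is the set of sites reachable from `z` without leaving the box of four layers of cells around the
cell of `z`; its path-metric diameter is at most `36 / M` (`dPathIn_le_of_Loc`). Two local
clusters with the same cell are equal or disjoint, so a cluster is covered by its distinct local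
clusters and it suffices to bound their number (`exists_cover`). Either a single local cluster is
the whole cluster, or each of them contains a crossing of one of a bounded number (depending on
`M` only) of quadrilaterals: rhombi of side `h` or `3 * h`, or rectangles with `h` rows and about
`8 * h` sites per row (`exit_quad`). Hence if some colour and cell produced many local clusters,
one of these quadrilaterals would have many disjoint monochromatic crossings. This covering
argument is deterministic and applies to every set `V` of sites of one colour in `Λ_n`, so a
single event serves all domains `Q` at once.

A crossing of a fixed quadrilateral has probability at most `1 - 2⁻⁴⁶`, uniformly in `h ≥ 3`. For
a rhombus the bound is `1 / 2`: crossings of the two colours in the two directions exclude each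
other (`rhombus_meet`) and the two events are exchanged by symmetry. Rectangles are crossed from
bottom to top, and their bound is obtained by doubling the width (`mu_TB_double`): given that a
narrow rectangle is not crossed, explore the clusters hanging from its top row; with conditional
probability at least `1 / 2`, by symmetry in the unexplored part of the doubled rectangle, no
crossing of the doubled rectangle starts in the left half of its bottom row. The same holds for
the right half by reflection, and Harris' inequality combines the two. By the van den Berg–Kesten
inequality for increasing events (`mu_disjOcc_le`), `k` disjoint crossings have probability at
most `(1 - 2⁻⁴⁶) ^ k` (`exists_pr_Bad_le`). Choosing `k` as a function of `M` and using a union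
bound over the quadrilaterals, the colours and the scales `M = 36 * (j + 1)` makes the total
failure probability smaller than `ε`; the scales with `n < 3 * M` need no probability, since there
all of the at most `9 * M ^ 2` sites can be used as centres. -/

/-!
Self-contained formalization framework for critical site percolation on the
triangular lattice `T` (sites indexed by `ℤ × ℤ` in triangular coordinates),
following the conventions of the paper "The scaling limit of random walk and
the intrinsic metric on planar critical percolation".
-/

noncomputable section
open scoped ENNReal
open scoped Classical

namespace Perco

/-! ## The lattice, the plane, and percolation configurations -/

/-- Adjacency in the triangular lattice `T` (lattice coordinates). -/
def Adj (u v : ℤ × ℤ) : Prop :=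
  (u.1 - v.1, u.2 - v.2) ∈
    ([(1, 0), (-1, 0), (0, 1), (0, -1), (1, -1), (-1, 1)] : List (ℤ × ℤ))

/-- The Euclidean point (as a complex number) corresponding to the point `p`
given in triangular coordinates. -/
def eucl (p : ℝ × ℝ) : ℂ := ⟨p.1 + p.2 / 2, Real.sqrt 3 / 2 * p.2⟩

/-- The triangular coordinates of the site `v` of `T_n = n⁻¹ T`. -/
def triPt (n : ℕ) (v : ℤ × ℤ) : ℝ × ℝ := ((v.1 : ℝ) / n, (v.2 : ℝ) / n)

/-- The Euclidean position of the site `v` of `T_n`. -/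
def sitePt (n : ℕ) (v : ℤ × ℤ) : ℂ := eucl (triPt n v)

/-- The sites of the standard `s × s` lattice box (for the scale-`s` lattice
this is `Λ_s`, the set of sites of `T_s` lying in `[0,1)²`). -/
def lam (s : ℕ) : Set (ℤ × ℤ) :=
  {v | 0 ≤ v.1 ∧ v.1 < (s : ℤ) ∧ 0 ≤ v.2 ∧ v.2 < (s : ℤ)}

/-- Percolation configurations on `Λ_n`. -/
abbrev Config (n : ℕ) := Fin n × Fin n → Bool

/-- The site colouring of `T_n` determined by a configuration on `Λ_n`
(`true` = open, `false` = closed; sites outside `Λ_n` are closed). -/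
def cfg (n : ℕ) (c : Config n) (v : ℤ × ℤ) : Bool :=
  if h : 0 ≤ v.1 ∧ v.1 < (n : ℤ) ∧ 0 ≤ v.2 ∧ v.2 < (n : ℤ) then
    c (⟨v.1.toNat, by omega⟩, ⟨v.2.toNat, by omega⟩)
  else false

/-- The probability of an event under critical site percolation on `Λ_n`
(each of the `2^(n²)` configurations is equally likely). -/
def pr (n : ℕ) (E : ((ℤ × ℤ) → Bool) → Prop) : ℝ :=
  (Nat.card {c : Config n // E (cfg n c)} : ℝ) / 2 ^ (n * n)

/-- The conditional probability `P(E | F)` under critical site percolation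
on `Λ_n`. -/
def cpr (n : ℕ) (E F : ((ℤ × ℤ) → Bool) → Prop) : ℝ :=
  (Nat.card {c : Config n // E (cfg n c) ∧ F (cfg n c)} : ℝ) /
    (Nat.card {c : Config n // F (cfg n c)} : ℝ)

/-! ## Paths, connectivity and the two metrics -/

/-- A lattice path: a nonempty list of sites with consecutive sites adjacent. -/
def IsPath (γ : List (ℤ × ℤ)) : Prop := γ ≠ [] ∧ γ.Chain' Adj

/-- `γ` is a lattice path from `x` to `y` all of whose sites lie in `S`. -/
def PathIn (S : Set (ℤ × ℤ)) (x y : ℤ × ℤ) (γ : List (ℤ × ℤ)) : Prop :=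
  IsPath γ ∧ (∀ v ∈ γ, v ∈ S) ∧ γ.head? = some x ∧ γ.getLast? = some y

/-- `x` and `y` are joined by a lattice path inside `S`. -/
def Conn (S : Set (ℤ × ℤ)) (x y : ℤ × ℤ) : Prop := ∃ γ, PathIn S x y γ

/-- The sites of `S` having colour `b`. -/
def coloured (ω : (ℤ × ℤ) → Bool) (b : Bool) (S : Set (ℤ × ℤ)) : Set (ℤ × ℤ) :=
  {v | v ∈ S ∧ ω v = b}

/-- The open sites of `S`. -/
def opens (ω : (ℤ × ℤ) → Bool) (S : Set (ℤ × ℤ)) : Set (ℤ × ℤ) := coloured ω true S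

/-- The graph distance (`D^geo`, adjacent sites at distance `1`) on the
subgraph of `T_n` induced on `V`; `∞` if there is no connecting path. -/
def dGeo (V : Set (ℤ × ℤ)) (x y : ℤ × ℤ) : ℝ≥0∞ :=
  ⨅ γ ∈ {γ : List (ℤ × ℤ) | PathIn V x y γ}, ((γ.length : ℝ≥0∞) - 1)

/-- The Dirichlet energy `Σ_{{u,v} edge of V} (f u - f v)²` of `f` on the
subgraph induced on `V` (each unordered edge counted once). -/
def energy (V : Set (ℤ × ℤ)) (f : ℤ × ℤ → ℝ) : ℝ≥0∞ :=
  (∑' u : V, ∑' v : V,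
      if Adj (u : ℤ × ℤ) (v : ℤ × ℤ) then
        ENNReal.ofReal ((f (u : ℤ × ℤ) - f (v : ℤ × ℤ)) ^ 2)
      else 0) / 2

/-- The effective resistance `D^res` between `x` and `y` on the subgraph
induced on `V`: the inverse of the minimal energy of a potential with
`f x = 1`, `f y = 0`. -/
def dRes (V : Set (ℤ × ℤ)) (x y : ℤ × ℤ) : ℝ≥0∞ :=
  (⨅ f ∈ {f : ℤ × ℤ → ℝ | f x = 1 ∧ f y = 0}, energy V f)⁻¹

/-- `D` is one of the two metrics considered: the graph distance or the
effective resistance. -/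
def IsDist (D : Set (ℤ × ℤ) → ℤ × ℤ → ℤ × ℤ → ℝ≥0∞) : Prop := D = dGeo ∨ D = dRes

/-! ## The crossing event `E`, the observable `X`, and its quantiles -/

/-- Euclidean position of the midpoint of the top side of the unit box. -/
def cTop : ℂ := eucl (1 / 2, 1)
/-- Euclidean position of the midpoint of the right side of the unit box. -/
def cRight : ℂ := eucl (1, 1 / 2)
/-- Euclidean position of the midpoint of the bottom side of the unit box. -/
def cBot : ℂ := eucl (1 / 2, 0)
/-- Euclidean position of the midpoint of the left side of the unit box. -/
def cLeft : ℂ := eucl (0, 1 / 2)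

/-- A left-to-right crossing of colour `b` of the standard `s × s` box:
a colour-`b` path in the box from the leftmost to the rightmost column
(i.e. within one lattice spacing of the left resp. right side). -/
def LRCross (s : ℕ) (ω : (ℤ × ℤ) → Bool) (b : Bool) (γ : List (ℤ × ℤ)) : Prop :=
  IsPath γ ∧ (∀ v ∈ γ, v ∈ lam s ∧ ω v = b) ∧
    (∃ x, γ.head? = some x ∧ x.1 = 0) ∧ ∃ y, γ.getLast? = some y ∧ y.1 = (s : ℤ) - 1

/-- The colour-`b` cluster of (the sites of) the path `γ` inside the standard
`s × s` box. -/
def clusterOf (s : ℕ) (ω : (ℤ × ℤ) → Bool) (b : Bool) (γ : List (ℤ × ℤ)) :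
    Set (ℤ × ℤ) :=
  {v | ∃ x ∈ γ, Conn (coloured ω b (lam s)) x v}

/-- The conditions of the event `E` (with parameter `δ`) for a witnessing
triple of left-to-right crossings (top closed, middle open, bottom closed)
of the standard `s × s` box. -/
def EWitness (δ : ℝ) (s : ℕ) (ω : (ℤ × ℤ) → Bool)
    (γt γm γb : List (ℤ × ℤ)) : Prop :=
  LRCross s ω false γt ∧ LRCross s ω true γm ∧ LRCross s ω false γb ∧
  γt.Disjoint γm ∧ γt.Disjoint γb ∧ γm.Disjoint γb ∧
  -- (ii) the two closed clusters come within graph distance 2 of each other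
  (∃ u ∈ clusterOf s ω false γt, ∃ w ∈ clusterOf s ω false γb,
      u = w ∨ Adj u w ∨ ∃ z, Adj u z ∧ Adj z w) ∧
  -- (iii) the top closed cluster hits the top side within distance δ of the
  -- midpoint of the top side, and stays 2δ away from the other midpoints
  (∃ v ∈ clusterOf s ω false γt, v.2 = (s : ℤ) - 1 ∧ dist (sitePt s v) cTop ≤ δ) ∧
  (∀ v ∈ clusterOf s ω false γt,
      2 * δ ≤ dist (sitePt s v) cRight ∧ 2 * δ ≤ dist (sitePt s v) cBot ∧
        2 * δ ≤ dist (sitePt s v) cLeft) ∧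
  -- (iv) symmetrically for the bottom closed cluster
  (∃ v ∈ clusterOf s ω false γb, v.2 = 0 ∧ dist (sitePt s v) cBot ≤ δ) ∧
  (∀ v ∈ clusterOf s ω false γb,
      2 * δ ≤ dist (sitePt s v) cTop ∧ 2 * δ ≤ dist (sitePt s v) cRight ∧
        2 * δ ≤ dist (sitePt s v) cLeft) ∧
  -- (v) the open cluster hits the left and right sides near their midpoints
  -- and stays 2δ away from the top and bottom midpoints
  (∃ v ∈ clusterOf s ω true γm, v.1 = 0 ∧ dist (sitePt s v) cLeft ≤ δ) ∧
  (∃ v ∈ clusterOf s ω true γm, v.1 = (s : ℤ) - 1 ∧ dist (sitePt s v) cRight ≤ δ) ∧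
  ∀ v ∈ clusterOf s ω true γm,
      2 * δ ≤ dist (sitePt s v) cTop ∧ 2 * δ ≤ dist (sitePt s v) cBot

/-- The event `E` (with parameter `δ`) for the standard `s × s` box. -/
def EventE (δ : ℝ) (s : ℕ) (ω : (ℤ × ℤ) → Bool) : Prop :=
  ∃ γt γm γb, EWitness δ s ω γt γm γb

/-- `u` lies (weakly) to the left of `w`: smaller Euclidean abscissa, ties
broken by the second coordinate. -/
def LeftLe (u w : ℤ × ℤ) : Prop :=
  2 * u.1 + u.2 < 2 * w.1 + w.2 ∨ (2 * u.1 + u.2 = 2 * w.1 + w.2 ∧ u.2 ≤ w.2)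

/-- `u` lies strictly to the left of `w`. -/
def LeftLt (u w : ℤ × ℤ) : Prop := LeftLe u w ∧ u ≠ w

/-- The left-most element of `S` (junk value if there is none). -/
def leftmostIn (S : Set (ℤ × ℤ)) : ℤ × ℤ :=
  if h : ∃ z, z ∈ S ∧ ∀ w ∈ S, LeftLe z w then h.choose else (0, 0)

/-- The right-most element of `S` (junk value if there is none). -/
def rightmostIn (S : Set (ℤ × ℤ)) : ℤ × ℤ :=
  if h : ∃ z, z ∈ S ∧ ∀ w ∈ S, LeftLe w z then h.choose else (0, 0)

/-- The set of sites of the standard `s × s` box adjacent to both the top and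
the bottom closed clusters produced by the event `E`. -/
def touchSet (δ : ℝ) (s : ℕ) (ω : (ℤ × ℤ) → Bool) : Set (ℤ × ℤ) :=
  {z | z ∈ lam s ∧ ∃ γt γm γb, EWitness δ s ω γt γm γb ∧
    (∃ u ∈ clusterOf s ω false γt, Adj z u) ∧ ∃ w ∈ clusterOf s ω false γb, Adj z w}

/-- The crossing observable `X` of the standard `s × s` box: the `D`-distance,
in the open subgraph of the box, between the left-most and the right-most
sites adjacent to both the top and the bottom closed clusters. -/
def XVar (D : Set (ℤ × ℤ) → ℤ × ℤ → ℤ × ℤ → ℝ≥0∞) (δ : ℝ) (s : ℕ)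
    (ω : (ℤ × ℤ) → Bool) : ℝ≥0∞ :=
  D (opens ω (lam s)) (leftmostIn (touchSet δ s ω)) (rightmostIn (touchSet δ s ω))

/-- The paper's fixed value `δ = 1/10000`. -/
def δ₀ : ℝ := 1 / 10000

/-- The `(1-p)`-quantile `q_n(p)` of `X_{Λ_n}` conditioned on `E(Λ_n)`. -/
def qn (D : Set (ℤ × ℤ) → ℤ × ℤ → ℤ × ℤ → ℝ≥0∞) (n : ℕ) (p : ℝ) : ℝ≥0∞ :=
  sInf {t : ℝ≥0∞ | 1 - p ≤ cpr n (fun ω => XVar D δ₀ n ω ≤ t) (EventE δ₀ n)}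

/-- `κ = κ(n,R)`, the unique integer with `R^(κ-1) < n ≤ R^κ`. -/
def kappa (R n : ℕ) : ℕ := sInf {k | n ≤ R ^ k}

/-- `P(X_s > t)`: the probability that the crossing observable of the
standard `s × s` box exceeds `t`, conditioned on the event `E`. -/
def tailP (D : Set (ℤ × ℤ) → ℤ × ℤ → ℤ × ℤ → ℝ≥0∞) (s : ℕ) (t : ℝ≥0∞) : ℝ :=
  cpr s (fun ω => t < XVar D δ₀ s ω) (EventE δ₀ s)

/-- Hypothesis `(✳)` for `(α, R, p)`: the a priori polynomial tail bound. -/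
def StarHyp (D : Set (ℤ × ℤ) → ℤ × ℤ → ℤ × ℤ → ℝ≥0∞) (α : ℝ) (R : ℕ) (p : ℝ) :
    Prop :=
  ∃ C₀ : ℝ, 0 < C₀ ∧ ∀ k : ℕ, 1 ≤ k → ∀ n : ℕ, R ^ k < n →
    tailP D (R ^ (kappa R n - k)) (qn D n p) ≤ C₀ * (R : ℝ) ^ (-α * (k : ℝ))

/-- Hypothesis `(✳★)` for `α`. -/
def StarStarHyp (D : Set (ℤ × ℤ) → ℤ × ℤ → ℤ × ℤ → ℝ≥0∞) (α : ℝ) : Prop :=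
  ∃ R₁ : ℕ, ∀ R : ℕ, R₁ ≤ R → ∃ p₁ : ℝ, 0 < p₁ ∧
    ∀ p : ℝ, 0 < p → p ≤ p₁ → StarHyp D α R p

/-! ## Boxes, annuli and crossings in triangular coordinates -/

/-- Membership in the box `B(x,r) = x + [-r,r)²` (triangular coordinates). -/
def memBox (x : ℝ × ℝ) (r : ℝ) (p : ℝ × ℝ) : Prop :=
  x.1 - r ≤ p.1 ∧ p.1 < x.1 + r ∧ x.2 - r ≤ p.2 ∧ p.2 < x.2 + r

/-- The box `B(x,r)` as a set of points of the plane. -/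
def boxPts (x : ℝ × ℝ) (r : ℝ) : Set (ℝ × ℝ) := {p | memBox x r p}

/-- The annulus `A(x;r₁,r₂) = B(x,r₂) ∖ B(x,r₁)` as a set of points. -/
def annPts (x : ℝ × ℝ) (r₁ r₂ : ℝ) : Set (ℝ × ℝ) := boxPts x r₂ \ boxPts x r₁

/-- The unit box `[0,1)²` (triangular coordinates). -/
def unitBox : Set (ℝ × ℝ) := {p | 0 ≤ p.1 ∧ p.1 < 1 ∧ 0 ≤ p.2 ∧ p.2 < 1}

/-- The site `v` of `T_n` lies in `B(x,r)`. -/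
def inBox (n : ℕ) (x : ℝ × ℝ) (r : ℝ) (v : ℤ × ℤ) : Prop := memBox x r (triPt n v)

/-- The site `v` of `T_n` lies in `A(x;r₁,r₂)`. -/
def inAnn (n : ℕ) (x : ℝ × ℝ) (r₁ r₂ : ℝ) (v : ℤ × ℤ) : Prop :=
  inBox n x r₂ v ∧ ¬ inBox n x r₁ v

/-- A crossing of the annulus `A(x;r₁,r₂)`: a path in the annulus whose first
site is adjacent to a site of `B(x,r₁)` and whose last site is adjacent to a
site outside `B(x,r₂)`. -/
def AnnCross (n : ℕ) (x : ℝ × ℝ) (r₁ r₂ : ℝ) (γ : List (ℤ × ℤ)) : Prop :=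
  IsPath γ ∧ (∀ v ∈ γ, inAnn n x r₁ r₂ v) ∧
    (∃ a w, γ.head? = some a ∧ Adj a w ∧ inBox n x r₁ w) ∧
    ∃ b w, γ.getLast? = some b ∧ Adj b w ∧ ¬ inBox n x r₂ w

/-- A monochromatic crossing of colour `b` of the annulus `A(x;r₁,r₂)`. -/
def AnnCrossCol (n : ℕ) (x : ℝ × ℝ) (r₁ r₂ : ℝ) (ω : (ℤ × ℤ) → Bool) (b : Bool)
    (γ : List (ℤ × ℤ)) : Prop :=
  AnnCross n x r₁ r₂ γ ∧ ∀ v ∈ γ, ω v = b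

/-- There exist `m` pairwise disjoint open crossings of `A(x;r₁,r₂)`. -/
def DisjCross (n : ℕ) (x : ℝ × ℝ) (r₁ r₂ : ℝ) (ω : (ℤ × ℤ) → Bool) (m : ℕ) : Prop :=
  ∃ γ : Fin m → List (ℤ × ℤ), (∀ i, AnnCrossCol n x r₁ r₂ ω true (γ i)) ∧
    ∀ i j, i ≠ j → (γ i).Disjoint (γ j)

/-! ## Circuits and almost-closed loops -/

/-- A circuit (closed walk): a lattice path whose last site is adjacent to,
or coincides with, its first site. -/
def IsCircuit (L : List (ℤ × ℤ)) : Prop :=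
  IsPath L ∧ ∃ a b, L.head? = some a ∧ L.getLast? = some b ∧ (Adj b a ∨ a = b)

/-- The set of sites `C` surrounds `B(x,r₁)` inside `B(x,r₂)`: every lattice
path from a site of `B(x,r₁)` to a site outside `B(x,r₂)` meets `C`. -/
def SurroundsIn (n : ℕ) (x : ℝ × ℝ) (r₁ r₂ : ℝ) (C : Set (ℤ × ℤ)) : Prop :=
  ∀ γ : List (ℤ × ℤ), IsPath γ →
    (∃ a, γ.head? = some a ∧ inBox n x r₁ a) →
    (∃ b, γ.getLast? = some b ∧ ¬ inBox n x r₂ b) →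
    ∃ v ∈ γ, v ∈ C

/-- The number of open sites (defects) on the list `L`. -/
def nDefects (ω : (ℤ × ℤ) → Bool) (L : List (ℤ × ℤ)) : ℕ :=
  (L.toFinset.filter fun v => ω v = true).card

/-- An almost-closed loop of the annulus `A(x;r₁,r₂)` with `m` defects:
a circuit in the annulus surrounding `B(x,r₁)`, all of whose sites are closed
except for exactly `m` open sites (the defects), each defect lying on a
distinct one of `m` pairwise disjoint open crossings of the annulus. -/
def IsACLoop (n : ℕ) (x : ℝ × ℝ) (r₁ r₂ : ℝ) (ω : (ℤ × ℤ) → Bool) (m : ℕ)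
    (L : List (ℤ × ℤ)) : Prop :=
  IsCircuit L ∧ (∀ v ∈ L, inAnn n x r₁ r₂ v) ∧
    SurroundsIn n x r₁ r₂ {v | v ∈ L} ∧ nDefects ω L = m ∧
    ∃ (d : Fin m → ℤ × ℤ) (γ : Fin m → List (ℤ × ℤ)),
      Function.Injective d ∧ (∀ i, d i ∈ L ∧ ω (d i) = true) ∧
      (∀ v ∈ L, ω v = true → ∃ i, v = d i) ∧
      (∀ i, AnnCrossCol n x r₁ r₂ ω true (γ i) ∧ d i ∈ γ i) ∧
      ∀ i j, i ≠ j → (γ i).Disjoint (γ j)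

/-- The minimal number of defects of an almost-closed loop of `A(x;r₁,r₂)`. -/
def minDefects (n : ℕ) (x : ℝ × ℝ) (r₁ r₂ : ℝ) (ω : (ℤ × ℤ) → Bool) : ℕ :=
  sInf {m | ∃ L, IsACLoop n x r₁ r₂ ω m L}

/-- `int φ`: the sites of the loop `L` together with all sites of `B(x,r₂)`
every lattice path from which to the complement of `B(x,r₂)` meets `L`. -/
def intRegion (n : ℕ) (x : ℝ × ℝ) (r₂ : ℝ) (L : List (ℤ × ℤ)) : Set (ℤ × ℤ) :=
  {v | v ∈ L} ∪ {z | inBox n x r₂ z ∧ ∀ γ : List (ℤ × ℤ), IsPath γ →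
    γ.head? = some z → (∃ b, γ.getLast? = some b ∧ ¬ inBox n x r₂ b) →
    ∃ v ∈ γ, v ∈ L}

/-- `L` is the outermost almost-closed loop of `A(x;r₁,r₂)` with minimally
many defects: its enclosed region contains that of every other
minimal-defect almost-closed loop. -/
def OutermostLoop (n : ℕ) (x : ℝ × ℝ) (r₁ r₂ : ℝ) (ω : (ℤ × ℤ) → Bool)
    (L : List (ℤ × ℤ)) : Prop :=
  IsACLoop n x r₁ r₂ ω (minDefects n x r₁ r₂ ω) L ∧
    ∀ L', IsACLoop n x r₁ r₂ ω (minDefects n x r₁ r₂ ω) L' →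
      intRegion n x r₂ L' ⊆ intRegion n x r₂ L

/-! ## The events `F₁`, `F₂`, `F₃` and the defect-distance property -/

/-- The `ℓ¹` distance in triangular coordinates. -/
def l1dist (p q : ℝ × ℝ) : ℝ := |p.1 - q.1| + |p.2 - q.2|

/-- Event `F₁(M)`: there are at most `M` pairwise disjoint open crossings of
`A(x;r,2r)`. -/
def F1 (n : ℕ) (x : ℝ × ℝ) (r : ℝ) (M : ℕ) (ω : (ℤ × ℤ) → Bool) : Prop :=
  ¬ DisjCross n x r (2 * r) ω (M + 1)

/-- Event `F₂(a)`: every defect of the outermost minimal-defect almost-closed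
loop of `A(x;r,2r)` is at `ℓ¹`-distance at least `a·r` from the boundary of
the annulus. -/
def F2 (n : ℕ) (x : ℝ × ℝ) (r a : ℝ) (ω : (ℤ × ℤ) → Bool) : Prop :=
  ∀ L, OutermostLoop n x r (2 * r) ω L → ∀ v ∈ L, ω v = true →
    ∀ q ∈ frontier (annPts x r (2 * r)), a * r ≤ l1dist (triPt n v) q

/-- Event `F₃(a)`: the defects of the outermost minimal-defect almost-closed
loop of `A(x;r,2r)` are pairwise at `ℓ¹`-distance at least `a·r`. -/
def F3 (n : ℕ) (x : ℝ × ℝ) (r a : ℝ) (ω : (ℤ × ℤ) → Bool) : Prop :=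
  ∀ L, OutermostLoop n x r (2 * r) ω L → ∀ v ∈ L, ω v = true →
    ∀ w ∈ L, ω w = true → v ≠ w → a * r ≤ l1dist (triPt n v) (triPt n w)

/-- The defect-distance property for the annulus `A(x;r,2r)`: any two defects
of the outermost minimal-defect almost-closed loop `φ` that are joined by an
open path inside `int φ` are within `D`-distance `t` of each other in the
graph induced on the open sites of `int φ`. -/
def GoodDist (D : Set (ℤ × ℤ) → ℤ × ℤ → ℤ × ℤ → ℝ≥0∞) (n : ℕ) (x : ℝ × ℝ)
    (r : ℝ) (t : ℝ≥0∞) (ω : (ℤ × ℤ) → Bool) : Prop :=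
  ∀ L, OutermostLoop n x r (2 * r) ω L →
    ∀ v ∈ L, ω v = true → ∀ w ∈ L, ω w = true →
      Conn (opens ω (intRegion n x (2 * r) L)) v w →
        D (opens ω (intRegion n x (2 * r) L)) v w ≤ t

/-! ## Pivotal sites and sub-boxes -/

/-- `z` is a pivotal site of the standard `s × s` box: every open
left-to-right crossing passes through it. -/
def PivotalLR (s : ℕ) (ω : (ℤ × ℤ) → Bool) (z : ℤ × ℤ) : Prop :=
  z ∈ lam s ∧ ∀ γ, LRCross s ω true γ → z ∈ γ

/-- `z₁, z₂` are consecutive pivotal sites (from left to right). -/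
def ConsecPiv (s : ℕ) (ω : (ℤ × ℤ) → Bool) (z₁ z₂ : ℤ × ℤ) : Prop :=
  PivotalLR s ω z₁ ∧ PivotalLR s ω z₂ ∧ LeftLt z₁ z₂ ∧
    ∀ z, PivotalLR s ω z → ¬ (LeftLt z₁ z ∧ LeftLt z z₂)

/-- The configuration of the lattice box with corner `c`, read in standard
coordinates. -/
def shift (ω : (ℤ × ℤ) → Bool) (c : ℤ × ℤ) : (ℤ × ℤ) → Bool := fun v => ω (c + v)

/-- The lattice box with corner `c` and `s` sites per side is contained
in `Λ_n`. -/
def BoxInLam (n : ℕ) (c : ℤ × ℤ) (s : ℕ) : Prop :=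
  0 ≤ c.1 ∧ c.1 + (s : ℤ) ≤ (n : ℤ) ∧ 0 ≤ c.2 ∧ c.2 + (s : ℤ) ≤ (n : ℤ)

/-- The event `τ₂ < ∞` for the standard `s × s` box with threshold `q`:
letting `u` be the left-most pivotal site and `z₁ = x_{τ₁}` the left-most
pivotal site with `X_{u,z₁} > q`, there is a pivotal site `z₂` (weakly to the
right of `z₁`) with `X_{z₁,z₂} > q`. -/
def Tau2Lt (D : Set (ℤ × ℤ) → ℤ × ℤ → ℤ × ℤ → ℝ≥0∞) (s : ℕ) (q : ℝ≥0∞)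
    (ω : (ℤ × ℤ) → Bool) : Prop :=
  ∃ z₁ z₂, PivotalLR s ω z₁ ∧ PivotalLR s ω z₂ ∧
    q < D (opens ω (lam s)) (leftmostIn {z | PivotalLR s ω z}) z₁ ∧
    (∀ z', PivotalLR s ω z' → LeftLt z' z₁ →
      ¬ q < D (opens ω (lam s)) (leftmostIn {z | PivotalLR s ω z}) z') ∧
    LeftLe z₁ z₂ ∧ q < D (opens ω (lam s)) z₁ z₂

/-! ## The diameter path metric and boundary distance -/

/-- The diameter path metric on `S`: the infimum of the Euclidean diameters
of lattice paths from `x` to `y` inside `S` (`∞` if there is none). -/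
def dPathIn (n : ℕ) (S : Set (ℤ × ℤ)) (x y : ℤ × ℤ) : ℝ≥0∞ :=
  ⨅ γ ∈ {γ : List (ℤ × ℤ) | PathIn S x y γ},
    EMetric.diam (sitePt n '' {v | v ∈ γ})

/-- The boundary of the unit parallelogram, as a subset of the Euclidean
plane. -/
def euclBd : Set ℂ := frontier (eucl '' unitBox)

/-! ## Dyadic domains -/

/-- The dyadic box of level `ℓ` with index `ij` (triangular coordinates). -/
def dyBox (ℓ : ℕ) (ij : ℕ × ℕ) : Set (ℝ × ℝ) :=
  {p | (ij.1 : ℝ) / 2 ^ ℓ ≤ p.1 ∧ p.1 < ((ij.1 : ℝ) + 1) / 2 ^ ℓ ∧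
       (ij.2 : ℝ) / 2 ^ ℓ ≤ p.2 ∧ p.2 < ((ij.2 : ℝ) + 1) / 2 ^ ℓ}

/-- `Q ∈ 𝒬`: `Q` is the interior of a finite union of dyadic boxes of a
common level inside `[0,1)²`, and `Q` is simply connected. -/
def IsDyadicDomain (Q : Set (ℝ × ℝ)) : Prop :=
  ∃ (ℓ : ℕ) (S : Finset (ℕ × ℕ)), (∀ ij ∈ S, ij.1 < 2 ^ ℓ ∧ ij.2 < 2 ^ ℓ) ∧
    Q = interior (⋃ ij ∈ S, dyBox ℓ ij) ∧ SimplyConnectedSpace ↥Q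

/-- The sites of `T_n` lying in `Q`. -/
def lamQ (n : ℕ) (Q : Set (ℝ × ℝ)) : Set (ℤ × ℤ) := {v | triPt n v ∈ Q}

/-! ## `R`-adic boxes and the boundary events `J¹`, `J²` -/

/-- Half the side length of a level-`k` `R`-adic box (side `n⁻¹ R^(κ-k)`). -/
def radicHalf (R n k : ℕ) : ℝ := (R : ℝ) ^ (kappa R n - k) / (2 * n)

/-- The centre of the level-`k` `R`-adic box of index `ij`. -/
def radicCtr (R n k : ℕ) (ij : ℕ × ℕ) : ℝ × ℝ :=
  ((2 * (ij.1 : ℝ) + 1) * radicHalf R n k, (2 * (ij.2 : ℝ) + 1) * radicHalf R n k)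

/-- The event `J¹_k`: every open path of Euclidean diameter at least
`n⁻¹ R^(κ-k)` contains a site at Euclidean distance more than
`n⁻¹ R^(κ-(1+ν)k+3)` from the boundary of `[0,1)²`. -/
def J1 (R n : ℕ) (ν : ℝ) (k : ℕ) (ω : (ℤ × ℤ) → Bool) : Prop :=
  ∀ γ : List (ℤ × ℤ), IsPath γ → (∀ v ∈ γ, v ∈ opens ω (lam n)) →
    ENNReal.ofReal ((n : ℝ)⁻¹ * (R : ℝ) ^ (kappa R n - k)) ≤
      EMetric.diam (sitePt n '' {v | v ∈ γ}) →
    ∃ v ∈ γ, (n : ℝ)⁻¹ * (R : ℝ) ^ ((kappa R n : ℝ) - (1 + ν) * (k : ℝ) + 3) <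
      Metric.infDist (sitePt n v) euclBd

/-- A level-`k` `R`-adic box is `J²`-bad: it lies in `[0,1)²`, its `R³`-fold
concentric enlargement meets the boundary of `[0,1)²`, and there are three
pairwise disjoint arms (two open, one closed) crossing the region
`R^(3+k(1/3+ν))·B ∖ R³·B`. -/
def J2Bad (R n : ℕ) (ν : ℝ) (k : ℕ) (ω : (ℤ × ℤ) → Bool) (ij : ℕ × ℕ) : Prop :=
  boxPts (radicCtr R n k ij) (radicHalf R n k) ⊆ unitBox ∧
  (∃ p ∈ boxPts (radicCtr R n k ij) ((R : ℝ) ^ 3 * radicHalf R n k),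
      p ∈ frontier unitBox) ∧
  ∃ γ : Fin 3 → List (ℤ × ℤ),
    (∀ i j, i ≠ j → (γ i).Disjoint (γ j)) ∧
    AnnCrossCol n (radicCtr R n k ij) ((R : ℝ) ^ 3 * radicHalf R n k)
      ((R : ℝ) ^ ((3 : ℝ) + (k : ℝ) * (1 / 3 + ν)) * radicHalf R n k) ω true (γ 0) ∧
    AnnCrossCol n (radicCtr R n k ij) ((R : ℝ) ^ 3 * radicHalf R n k)
      ((R : ℝ) ^ ((3 : ℝ) + (k : ℝ) * (1 / 3 + ν)) * radicHalf R n k) ω true (γ 1) ∧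
    AnnCrossCol n (radicCtr R n k ij) ((R : ℝ) ^ 3 * radicHalf R n k)
      ((R : ℝ) ^ ((3 : ℝ) + (k : ℝ) * (1 / 3 + ν)) * radicHalf R n k) ω false (γ 2)

/-- The event `J²_k`: there are at most `R^((1/3+ν)k)` `J²`-bad level-`k`
`R`-adic boxes. -/
def J2 (R n : ℕ) (ν : ℝ) (k : ℕ) (ω : (ℤ × ℤ) → Bool) : Prop :=
  (Nat.card {ij : ℕ × ℕ // J2Bad R n ν k ω ij} : ℝ) ≤
    (R : ℝ) ^ ((1 / 3 + ν) * (k : ℝ))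

/-! ## The four-arm event in a box -/

/-- The sites of the lattice box with corner `c` and `s` sites per side. -/
def latBox (c : ℤ × ℤ) (s : ℕ) : Set (ℤ × ℤ) :=
  {v | c.1 ≤ v.1 ∧ v.1 < c.1 + (s : ℤ) ∧ c.2 ≤ v.2 ∧ v.2 < c.2 + (s : ℤ)}

/-- The lattice box with corner `c` and `s` sites per side, as a region in
triangular coordinates. -/
def latBoxRegion (n : ℕ) (c : ℤ × ℤ) (s : ℕ) : Set (ℝ × ℝ) :=
  {p | (c.1 : ℝ) / n ≤ p.1 ∧ p.1 < ((c.1 : ℝ) + s) / n ∧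
       (c.2 : ℝ) / n ≤ p.2 ∧ p.2 < ((c.2 : ℝ) + s) / n}

/-- The `i`-th side of the (closed) box with corner `c`, `s` sites per side,
numbered clockwise from the top, as a segment in triangular coordinates. -/
def sideSet (n : ℕ) (c : ℤ × ℤ) (s : ℕ) (i : Fin 4) : Set (ℝ × ℝ) :=
  match i with
  | 0 => {p | p.2 = ((c.2 : ℝ) + s) / n ∧ (c.1 : ℝ) / n ≤ p.1 ∧ p.1 ≤ ((c.1 : ℝ) + s) / n}
  | 1 => {p | p.1 = ((c.1 : ℝ) + s) / n ∧ (c.2 : ℝ) / n ≤ p.2 ∧ p.2 ≤ ((c.2 : ℝ) + s) / n}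
  | 2 => {p | p.2 = (c.2 : ℝ) / n ∧ (c.1 : ℝ) / n ≤ p.1 ∧ p.1 ≤ ((c.1 : ℝ) + s) / n}
  | 3 => {p | p.1 = (c.1 : ℝ) / n ∧ (c.2 : ℝ) / n ≤ p.2 ∧ p.2 ≤ ((c.2 : ℝ) + s) / n}

/-- The site `v` lies on the row of the box (corner `c`, `s` sites per side)
nearest to its `i`-th side. -/
def OnSide (c : ℤ × ℤ) (s : ℕ) (i : Fin 4) (v : ℤ × ℤ) : Prop :=
  match i with
  | 0 => v.2 = c.2 + (s : ℤ) - 1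
  | 1 => v.1 = c.1 + (s : ℤ) - 1
  | 2 => v.2 = c.2
  | 3 => v.1 = c.1

/-- The prescribed colours of the four arms: closed towards the top and the
bottom, open towards the right and the left. -/
def armColor : Fin 4 → Bool := ![false, true, false, true]

/-- The four-arm event `Arm₄(x,a,B)` for the lattice box `B` with corner `c`
and `s` sites per side: four pairwise disjoint arms of the prescribed colours
from `B(x,a)` to the four sides of `B`, each consisting of sites of
`B ∖ B(x,a)`; the requirement for a side met by `B(x,a)` is waived. -/
def Arm4 (n : ℕ) (c : ℤ × ℤ) (s : ℕ) (x : ℝ × ℝ) (a : ℝ)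
    (ω : (ℤ × ℤ) → Bool) : Prop :=
  ∃ η : Fin 4 → List (ℤ × ℤ),
    (∀ i j, i ≠ j → (η i).Disjoint (η j)) ∧
    ∀ i : Fin 4, (¬ ∃ p ∈ boxPts x a, p ∈ sideSet n c s i) →
      IsPath (η i) ∧
      (∀ v ∈ η i, v ∈ latBox c s ∧ ¬ inBox n x a v ∧ ω v = armColor i) ∧
      (∃ h w, (η i).head? = some h ∧ Adj h w ∧ inBox n x a w) ∧
      ∃ e, (η i).getLast? = some e ∧ OnSide c s i e

/-! ## Tiles and minimal distances (disjoint-annuli construction) -/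

/-- The centres of the tiles of side `n⁻¹R^(κ-j)` entirely contained in the
box `B(0, R^(-i)/2)`. -/
def tileCtrs (R n : ℕ) (i j : ℤ) : Set (ℝ × ℝ) :=
  {p | ∃ a b : ℕ,
    ((a : ℝ) + 1) * ((n : ℝ)⁻¹ * (R : ℝ) ^ ((kappa R n : ℤ) - j)) ≤ (R : ℝ) ^ (-i) ∧
    ((b : ℝ) + 1) * ((n : ℝ)⁻¹ * (R : ℝ) ^ ((kappa R n : ℤ) - j)) ≤ (R : ℝ) ^ (-i) ∧
    p = (-(R : ℝ) ^ (-i) / 2 + ((a : ℝ) + 1 / 2) * ((n : ℝ)⁻¹ * (R : ℝ) ^ ((kappa R n : ℤ) - j)),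
         -(R : ℝ) ^ (-i) / 2 + ((b : ℝ) + 1 / 2) * ((n : ℝ)⁻¹ * (R : ℝ) ^ ((kappa R n : ℤ) - j)))}

/-- `min(R^(-i), min_(v<u) |z_u - z_v|)` (Euclidean distances). -/
def rmin (R : ℕ) (i : ℤ) (m : ℕ) (z : Fin m → ℝ × ℝ) (u : Fin m) : ℝ :=
  sInf ({(R : ℝ) ^ (-i)} ∪ {d | ∃ v, v < u ∧ d = dist (eucl (z u)) (eucl (z v))})

/-! ## Semiarms and the events `H_j` -/

/-- A colour-`b` crossing of `A(x;r₁,r₂)` whose sites lie in `S`. -/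
def AnnCrossIn (S : Set (ℤ × ℤ)) (n : ℕ) (x : ℝ × ℝ) (r₁ r₂ : ℝ)
    (ω : (ℤ × ℤ) → Bool) (b : Bool) (γ : List (ℤ × ℤ)) : Prop :=
  AnnCrossCol n x r₁ r₂ ω b γ ∧ ∀ v ∈ γ, v ∈ S

/-- Six pairwise disjoint arms of alternating colours crossing `A(x;r₁,r₂)`,
with sites in `S`. -/
def SixArms (S : Set (ℤ × ℤ)) (n : ℕ) (x : ℝ × ℝ) (r₁ r₂ : ℝ)
    (ω : (ℤ × ℤ) → Bool) : Prop :=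
  ∃ γ : Fin 6 → List (ℤ × ℤ), (∀ i j, i ≠ j → (γ i).Disjoint (γ j)) ∧
    ∀ i, AnnCrossIn S n x r₁ r₂ ω (decide (i.1 % 2 = 0)) (γ i)

/-- Three pairwise disjoint arms of alternating colours crossing
`A(x;r₁,r₂)`, with sites in `S`. -/
def ThreeArms (S : Set (ℤ × ℤ)) (n : ℕ) (x : ℝ × ℝ) (r₁ r₂ : ℝ)
    (ω : (ℤ × ℤ) → Bool) : Prop :=
  ∃ γ : Fin 3 → List (ℤ × ℤ), (∀ i j, i ≠ j → (γ i).Disjoint (γ j)) ∧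
    ∀ i, AnnCrossIn S n x r₁ r₂ ω (decide (i.1 % 2 = 0)) (γ i)

/-- The box with centre `z` and half-width `h` has six semiarms of length `l`
(scaling base `R`, ambient site set `S`): for some `0 ≤ l' ≤ l` there are six
alternating arms crossing `R^(l')·B ∖ R³·B` and six crossing
`R^l·B ∖ R^(l'+3)·B`. -/
def SixSemiarms (S : Set (ℤ × ℤ)) (n R : ℕ) (z : ℝ × ℝ) (h : ℝ) (l : ℕ)
    (ω : (ℤ × ℤ) → Bool) : Prop :=
  ∃ l' : ℕ, l' ≤ l ∧ SixArms S n z ((R : ℝ) ^ 3 * h) ((R : ℝ) ^ l' * h) ω ∧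
    SixArms S n z ((R : ℝ) ^ (l' + 3) * h) ((R : ℝ) ^ l * h) ω

/-- The distances from `z` to the four sides of the box with corner `c` and
`s` sites per side (clockwise from the top). -/
def sideDists (n : ℕ) (c : ℤ × ℤ) (s : ℕ) (z : ℝ × ℝ) : Fin 4 → ℝ :=
  ![((c.2 : ℝ) + s) / n - z.2, ((c.1 : ℝ) + s) / n - z.1,
    z.2 - (c.2 : ℝ) / n, z.1 - (c.1 : ℝ) / n]

/-- The projections of `z` to the four sides of the box. -/
def sideProj (n : ℕ) (c : ℤ × ℤ) (s : ℕ) (z : ℝ × ℝ) : Fin 4 → ℝ × ℝ :=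
  ![(z.1, ((c.2 : ℝ) + s) / n), (((c.1 : ℝ) + s) / n, z.2),
    (z.1, (c.2 : ℝ) / n), ((c.1 : ℝ) / n, z.2)]

/-- `q` is the projection of `z` to a nearest side of the box. -/
def ProjNearestSide (n : ℕ) (c : ℤ × ℤ) (s : ℕ) (z q : ℝ × ℝ) : Prop :=
  ∃ i : Fin 4, q = sideProj n c s z i ∧
    ∀ i' : Fin 4, sideDists n c s z i ≤ sideDists n c s z i'

/-- The box with centre `z` (of level `j`) has three semiarms of length `l`
near the boundary of the ambient box with corner `c` and `s` sites per side:
with `z'` the projection of `z` to a nearest side, for some `0 ≤ l' ≤ l`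
there are three alternating arms crossing the ambient intersection of
`A(z'; n⁻¹R^(κ-j+3), n⁻¹R^(κ-j+l'))` and three crossing
`A(z'; n⁻¹R^(κ-j+l'), n⁻¹R^(κ-j+l))`. -/
def ThreeSemiarmsBd (n R : ℕ) (c : ℤ × ℤ) (s : ℕ) (z : ℝ × ℝ) (j l : ℕ)
    (ω : (ℤ × ℤ) → Bool) : Prop :=
  ∃ z', ProjNearestSide n c s z z' ∧ ∃ l' : ℕ, l' ≤ l ∧
    ThreeArms (latBox c s) n z' ((n : ℝ)⁻¹ * (R : ℝ) ^ (kappa R n - j + 3))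
      ((n : ℝ)⁻¹ * (R : ℝ) ^ (kappa R n - j + l')) ω ∧
    ThreeArms (latBox c s) n z' ((n : ℝ)⁻¹ * (R : ℝ) ^ (kappa R n - j + l'))
      ((n : ℝ)⁻¹ * (R : ℝ) ^ (kappa R n - j + l)) ω

/-- The centre of the level-`j` `R`-adic sub-box of index `ab` of the box
with corner `c`. -/
def subCtr (n R : ℕ) (c : ℤ × ℤ) (j : ℕ) (ab : ℕ × ℕ) : ℝ × ℝ :=
  ((c.1 : ℝ) / n + (2 * (ab.1 : ℝ) + 1) * radicHalf R n j,
   (c.2 : ℝ) / n + (2 * (ab.2 : ℝ) + 1) * radicHalf R n j)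

/-- `N_{j,B^(i)}`: the number of level-`j` `R`-adic sub-boxes of the box
`B^(k)` (corner `c`) contained in `B(zc, R^(-i)/2)` having six semiarms of
alternating colours of length `j - i - 4`. -/
def NjCount (n R : ℕ) (c : ℤ × ℤ) (k i j : ℕ) (zc : ℝ × ℝ)
    (ω : (ℤ × ℤ) → Bool) : ℕ :=
  Nat.card {ab : ℕ × ℕ // ab.1 < R ^ (j - k) ∧ ab.2 < R ^ (j - k) ∧
    boxPts (subCtr n R c j ab) (radicHalf R n j) ⊆
      boxPts zc ((R : ℝ) ^ (-(i : ℤ)) / 2) ∧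
    SixSemiarms (latBox c (R ^ (kappa R n - k))) n R (subCtr n R c j ab)
      (radicHalf R n j) (j - i - 4) ω}

/-- `N^h_j`: the number of level-`j` `R`-adic sub-boxes of `B^(k)` whose
`R³`-fold enlargement meets the boundary of `B^(k)` and which have three
semiarms of length `j - k - 1` near the boundary. -/
def NhCount (n R : ℕ) (c : ℤ × ℤ) (k j : ℕ) (ω : (ℤ × ℤ) → Bool) : ℕ :=
  Nat.card {ab : ℕ × ℕ // ab.1 < R ^ (j - k) ∧ ab.2 < R ^ (j - k) ∧
    (∃ p ∈ boxPts (subCtr n R c j ab) ((R : ℝ) ^ 3 * radicHalf R n j),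
        p ∈ frontier (latBoxRegion n c (R ^ (kappa R n - k)))) ∧
    ThreeSemiarmsBd n R c (R ^ (kappa R n - k)) (subCtr n R c j ab) j
      (j - k - 1) ω}

/-- The event `H_j` for the box `B^(k)` with corner `c`: all the semiarm
counts `N_{j,B^(i)}` (for `k-2 ≤ i ≤ j-10` and all admissible centres) and
`N^h_j` are at most `R^(jν)`. -/
def Hj (n R : ℕ) (c : ℤ × ℤ) (k : ℕ) (ν : ℝ) (j : ℕ)
    (ω : (ℤ × ℤ) → Bool) : Prop :=
  (∀ i : ℕ, (k : ℤ) - 2 ≤ (i : ℤ) → (i : ℤ) ≤ (j : ℤ) - 10 →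
    ∀ ab : ℕ × ℕ, ab.1 < R ^ (i + 3 - k) → ab.2 < R ^ (i + 3 - k) →
      (NjCount n R c k i j (subCtr n R c (i + 3) ab) ω : ℝ) ≤
        (R : ℝ) ^ (ν * (j : ℝ))) ∧
  (k + 9 ≤ j → (NhCount n R c k j ω : ℝ) ≤ (R : ℝ) ^ (ν * (j : ℝ)))

/-! ## One-arm counts and left-right crossing observables -/

/-- The number of open sites of `Λ_n` joined by an open path to a site at
Euclidean distance at least `1/2`. -/
def oneArmCount (n : ℕ) (ω : (ℤ × ℤ) → Bool) : ℕ :=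
  Nat.card {z : ℤ × ℤ // z ∈ lam n ∧ ω z = true ∧
    ∃ w, Conn (opens ω (lam n)) z w ∧ 1 / 2 ≤ dist (sitePt n z) (sitePt n w)}

/-- The sites of `Λ_n` within one lattice spacing of the left side. -/
def leftSide (n : ℕ) : Set (ℤ × ℤ) := {v | v ∈ lam n ∧ v.1 = 0}

/-- The sites of `Λ_n` within one lattice spacing of the right side. -/
def rightSide (n : ℕ) : Set (ℤ × ℤ) := {v | v ∈ lam n ∧ v.1 = (n : ℤ) - 1}

/-- The event that some open path joins `∂_L Λ_n` to `∂_R Λ_n`. -/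
def CrossEvent (n : ℕ) (ω : (ℤ × ℤ) → Bool) : Prop :=
  ∃ x ∈ leftSide n, ∃ y ∈ rightSide n, Conn (opens ω (lam n)) x y

/-- The geodesic distance between `∂_L Λ_n` and `∂_R Λ_n` in the open
subgraph of `Λ_n`. -/
def SGeo (n : ℕ) (ω : (ℤ × ℤ) → Bool) : ℝ≥0∞ :=
  ⨅ x ∈ leftSide n, ⨅ y ∈ rightSide n, dGeo (opens ω (lam n)) x y

/-- The effective resistance between `∂_L Λ_n` and `∂_R Λ_n` in the open
subgraph of `Λ_n`. -/
def SRes (n : ℕ) (ω : (ℤ × ℤ) → Bool) : ℝ≥0∞ :=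
  (⨅ f ∈ {f : ℤ × ℤ → ℝ | (∀ x ∈ opens ω (leftSide n), f x = 1) ∧
      ∀ y ∈ opens ω (rightSide n), f y = 0}, energy (opens ω (lam n)) f)⁻¹

/-- The conditional expectation `E[S | F]` under critical percolation
on `Λ_n`. -/
def condExp (n : ℕ) (S : ((ℤ × ℤ) → Bool) → ℝ≥0∞)
    (F : ((ℤ × ℤ) → Bool) → Prop) : ℝ≥0∞ :=
  (∑ cc : Config n, if F (cfg n cc) then S (cfg n cc) else 0) /
    (Nat.card {cc : Config n // F (cfg n cc)} : ℝ≥0∞)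

/-- The `q`-quantile of the conditional law of `S` given `F`. -/
def condQuant (n : ℕ) (S : ((ℤ × ℤ) → Bool) → ℝ≥0∞)
    (F : ((ℤ × ℤ) → Bool) → Prop) (q : ℝ) : ℝ≥0∞ :=
  sInf {t : ℝ≥0∞ | q ≤ cpr n (fun ω => S ω ≤ t) F}

/-! ### Connectivity in sets of sites -/

lemma adj_iff {u v : ℤ × ℤ} : Adj u v ↔
    (u.1 = v.1 + 1 ∧ u.2 = v.2) ∨ (u.1 = v.1 - 1 ∧ u.2 = v.2) ∨
    (u.1 = v.1 ∧ u.2 = v.2 + 1) ∨ (u.1 = v.1 ∧ u.2 = v.2 - 1) ∨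
    (u.1 = v.1 + 1 ∧ u.2 = v.2 - 1) ∨ (u.1 = v.1 - 1 ∧ u.2 = v.2 + 1) := by
  simp only [Adj, List.mem_cons, Prod.mk.injEq, List.not_mem_nil, or_false]
  omega

lemma Adj.symm {u v : ℤ × ℤ} (h : Adj u v) : Adj v u := by
  rw [adj_iff] at h ⊢; omega

/-- `Rch S x y`: the sites `x` and `y` are joined by a lattice path inside `S`. This is `Conn`
with the list replaced by a reflexive-transitive closure, which is what inductions use. -/
def Rch (S : Set (ℤ × ℤ)) (x y : ℤ × ℤ) : Prop :=
  x ∈ S ∧ Relation.ReflTransGen (fun u v => Adj u v ∧ v ∈ S) x y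

lemma Rch.refl {S : Set (ℤ × ℤ)} {x : ℤ × ℤ} (h : x ∈ S) : Rch S x x :=
  ⟨h, Relation.ReflTransGen.refl⟩

lemma Rch.left {S : Set (ℤ × ℤ)} {x y : ℤ × ℤ} (h : Rch S x y) : x ∈ S := h.1

lemma Rch.tail {S : Set (ℤ × ℤ)} {x y z : ℤ × ℤ} (h : Rch S x y) (ha : Adj y z) (hz : z ∈ S) :
    Rch S x z := ⟨h.1, h.2.tail ⟨ha, hz⟩⟩

/-- Induction along a path, one site at a time. -/
lemma Rch.rec' {S : Set (ℤ × ℤ)} {x : ℤ × ℤ} {P : ℤ × ℤ → Prop} (h0 : x ∈ S → P x)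
    (hs : ∀ y z, Rch S x y → Adj y z → z ∈ S → P y → P z) {y : ℤ × ℤ} (h : Rch S x y) : P y := by
  obtain ⟨hx, h⟩ := h
  induction h with
  | refl => exact h0 hx
  | tail h1 h2 ih => exact hs _ _ ⟨hx, h1⟩ h2.1 h2.2 ih

lemma Rch.right {S : Set (ℤ × ℤ)} {x y : ℤ × ℤ} (h : Rch S x y) : y ∈ S :=
  h.rec' id (fun _ _ _ _ hz _ => hz)

lemma Rch.trans {S : Set (ℤ × ℤ)} {x y z : ℤ × ℤ} (h : Rch S x y) (h' : Rch S y z) :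
    Rch S x z := ⟨h.1, h.2.trans h'.2⟩

lemma Rch.edge {S : Set (ℤ × ℤ)} {x y : ℤ × ℤ} (hx : x ∈ S) (hy : y ∈ S) (h : Adj x y) :
    Rch S x y := (Rch.refl hx).tail h hy

lemma Rch.symm {S : Set (ℤ × ℤ)} {x y : ℤ × ℤ} (h : Rch S x y) : Rch S y x := by
  refine h.rec' (P := fun y => Rch S y x) Rch.refl ?_
  intro y z h1 ha hz ih
  exact (Rch.edge hz ih.left ha.symm).trans ih

lemma Rch.mono {S S' : Set (ℤ × ℤ)} (hS : S ⊆ S') {x y : ℤ × ℤ} (h : Rch S x y) : Rch S' x y := by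
  refine h.rec' (P := fun y => Rch S' x y) (fun hx => Rch.refl (hS hx)) ?_
  intro y z h1 ha hz ih
  exact ih.tail ha (hS hz)

/-- A path stays in its own connected component. -/
lemma Rch.comp {S : Set (ℤ × ℤ)} {x y : ℤ × ℤ} (h : Rch S x y) : Rch {v | Rch S x v} x y := by
  refine h.rec' (P := fun y => Rch {v | Rch S x v} x y) (fun hx => Rch.refl (Rch.refl hx)) ?_
  intro y z h1 ha hz ih
  exact ih.tail ha (h1.tail ha hz)

/-- Image of a path under an automorphism of the lattice. -/
lemma Rch.map {S S' : Set (ℤ × ℤ)} (f : ℤ × ℤ → ℤ × ℤ) (hA : ∀ u v, Adj u v → Adj (f u) (f v))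
    (hS : ∀ v ∈ S, f v ∈ S') {x y : ℤ × ℤ} (h : Rch S x y) : Rch S' (f x) (f y) := by
  refine h.rec' (P := fun y => Rch S' (f x) (f y)) (fun hx => Rch.refl (hS _ hx)) ?_
  intro y z h1 ha hz ih
  exact ih.tail (hA _ _ ha) (hS _ hz)

lemma conn_iff_rch {S : Set (ℤ × ℤ)} {x y : ℤ × ℤ} : Conn S x y ↔ Rch S x y := by
  constructor
  · rintro ⟨γ, ⟨hne, hch⟩, hS, hh, hl⟩
    have key : ∀ (γ : List (ℤ × ℤ)) (x : ℤ × ℤ), γ.IsChain Adj → (∀ v ∈ γ, v ∈ S) →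
        γ.head? = some x → γ.getLast? = some y → Rch S x y := by
      intro γ
      induction γ with
      | nil => intro x _ _ h; simp at h
      | cons a l ih =>
        intro x hc hS hh hl
        simp only [List.head?_cons, Option.some.injEq] at hh
        subst hh
        cases l with
        | nil =>
          simp only [List.getLast?_singleton, Option.some.injEq] at hl
          subst hl
          exact Rch.refl (hS _ (by simp))
        | cons b l =>
          rw [List.isChain_cons_cons] at hc
          have := ih b hc.2 (fun v hv => hS v (by simp [List.mem_cons] at hv ⊢; tauto)) rfl
            (by simpa using hl)
          exact (Rch.edge (hS _ (by simp)) this.left hc.1).trans this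
    exact key γ x hch hS hh hl
  · intro h
    refine h.rec' (P := fun y => Conn S x y) ?_ ?_
    · intro hx
      exact ⟨[x], ⟨by simp, List.isChain_singleton _⟩, by simpa using hx, rfl, rfl⟩
    · rintro y z - ha hz ⟨γ, ⟨hne, hch⟩, hS, hh, hl⟩
      refine ⟨γ ++ [z], ⟨by simp, ?_⟩, ?_, ?_, by simp⟩
      · refine List.IsChain.append hch (List.isChain_singleton _) ?_
        intro a hal b hb
        rw [hl] at hal
        simp at hal hb
        subst hal; subst hb
        exact ha
      · intro v hv
        rcases List.mem_append.1 hv with h | h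
        · exact hS v h
        · simp at h; rw [h]; exact hz
      · simp [List.head?_append, hh]

/-- Crossing a slab: if an integer-valued `g` changes by at most one along edges, a path from
`{g ≤ lo}` to `{hi ≤ g}` contains a path inside `{lo ≤ g ≤ hi}` from `{g = lo}` to `{g = hi}`. -/
lemma Rch.extract {S : Set (ℤ × ℤ)} (g : ℤ × ℤ → ℤ) (hg : ∀ u v, Adj u v → g v ≤ g u + 1)
    {lo hi : ℤ} (hlh : lo ≤ hi) {x y : ℤ × ℤ} (h : Rch S x y) (hx : g x ≤ lo) (hy : hi ≤ g y) :
    ∃ u w, g u = lo ∧ g w = hi ∧ Rch {v | v ∈ S ∧ lo ≤ g v ∧ g v ≤ hi} u w := by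
  set S' := {v | v ∈ S ∧ lo ≤ g v ∧ g v ≤ hi} with hS'
  have key : (∃ u w, g u = lo ∧ g w = hi ∧ Rch S' u w) ∨ g y < lo ∨
      (g y < hi ∨ hi = lo) ∧ ∃ u, g u = lo ∧ Rch S' u y := by
    refine h.rec' (P := fun y => (∃ u w, g u = lo ∧ g w = hi ∧ Rch S' u w) ∨ g y < lo ∨
      (g y < hi ∨ hi = lo) ∧ ∃ u, g u = lo ∧ Rch S' u y) ?_ ?_
    · intro hxS
      rcases lt_or_eq_of_le hx with h1 | h1
      · exact Or.inr (Or.inl h1)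
      · refine Or.inr (Or.inr ⟨by omega, x, h1, Rch.refl ⟨hxS, by omega, by omega⟩⟩)
    · intro y z hy ha hz ih
      have h1 := hg _ _ ha
      rcases ih with ih | ih | ⟨ih1, u, hu, ih⟩
      · exact Or.inl ih
      · by_cases hzl : g z < lo
        · exact Or.inr (Or.inl hzl)
        · exact Or.inr (Or.inr ⟨by omega, z, by omega, Rch.refl ⟨hz, by omega, by omega⟩⟩)
      · by_cases hzl : g z < lo
        · exact Or.inr (Or.inl hzl)
        · by_cases h3 : g z ≤ hi
          · have h4 := ih.tail ha (show z ∈ S' from ⟨hz, by omega, h3⟩)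
            by_cases h5 : g z = hi
            · exact Or.inl ⟨u, z, hu, h5, h4⟩
            · exact Or.inr (Or.inr ⟨by omega, u, hu, h4⟩)
          · exact Or.inl ⟨u, y, hu, by have := ih.right.2.2; omega, ih⟩
  rcases key with h1 | h1 | ⟨h1, u, hu, h2⟩
  · exact h1
  · omega
  · exact ⟨u, y, hu, by have := h2.right.2; omega, h2⟩

lemma fst_step (u v : ℤ × ℤ) (h : Adj u v) : v.1 ≤ u.1 + 1 := by rw [adj_iff] at h; omega
lemma snd_step (u v : ℤ × ℤ) (h : Adj u v) : v.2 ≤ u.2 + 1 := by rw [adj_iff] at h; omega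

/-- Sites of a row segment inside `S` are joined inside `S`. -/
lemma rch_row {S : Set (ℤ × ℤ)} {b a a' : ℤ} (haa : a ≤ a')
    (h : ∀ c, a ≤ c → c ≤ a' → (c, b) ∈ S) : Rch S (a, b) (a', b) := by
  obtain ⟨k, rfl⟩ : ∃ k : ℕ, a' = a + k := ⟨(a' - a).toNat, by omega⟩
  clear haa
  induction k with
  | zero => simpa using Rch.refl (h a le_rfl (by simp))
  | succ k ih =>
    refine (ih (fun c h1 h2 => h c h1 (by push_cast; omega))).tail ?_ (h _ (by omega) (by omega))
    rw [adj_iff]; push_cast; simp; omega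

/-! ### Planarity: crossing paths intersect -/

/-- The edge `p q` passes from column `v.1` to column `v.1 + 1` (or back) below `v`. -/
def Below (p q v : ℤ × ℤ) : Prop :=
  (p.1 = v.1 ∧ q.1 = v.1 + 1 ∧ p.2 < v.2) ∨ (q.1 = v.1 ∧ p.1 = v.1 + 1 ∧ q.2 < v.2)

lemma ne_coord {u v : ℤ × ℤ} (h : u ≠ v) : u.1 ≠ v.1 ∨ u.2 ≠ v.2 := by
  by_contra hc
  push Not at hc
  exact h (Prod.ext hc.1 hc.2)

lemma below_right {p q v w : ℤ × ℤ} (h : Adj p q) (h1 : p ≠ v) (h2 : p ≠ w) (h3 : q ≠ v)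
    (h4 : q ≠ w) (hw : w.1 = v.1 + 1) (hw' : w.2 = v.2 ∨ w.2 = v.2 - 1) :
    (Below p q v ↔ Below p q w) ↔
      ((p.1 = w.1 ∧ p.2 < w.2) ↔ (q.1 = w.1 ∧ q.2 < w.2)) := by
  have h1 := ne_coord h1
  have h2 := ne_coord h2
  have h3 := ne_coord h3
  have h4 := ne_coord h4
  rw [adj_iff] at h
  unfold Below
  obtain ⟨p1, p2⟩ := p
  obtain ⟨q1, q2⟩ := q
  obtain ⟨v1, v2⟩ := v
  obtain ⟨w1, w2⟩ := w
  simp only at *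
  subst hw
  rcases hw' with rfl | rfl <;> rcases h with ⟨rfl, rfl⟩ | ⟨rfl, rfl⟩ | ⟨rfl, rfl⟩ | ⟨rfl, rfl⟩ |
    ⟨rfl, rfl⟩ | ⟨rfl, rfl⟩ <;> omega

lemma xor_chain {a b c d x y z : Prop} (h : (a ↔ b) ↔ (x ↔ y)) (h' : (c ↔ d) ↔ (y ↔ z)) :
    (¬ (a ↔ c) ↔ ¬ (b ↔ d)) ↔ (x ↔ z) := by
  by_cases a <;> by_cases b <;> by_cases c <;> by_cases d <;> by_cases x <;> by_cases y <;>
    simp_all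

lemma xor_chain' {a b x y z : Prop} (h : a ↔ ¬ (x ↔ y)) (h' : b ↔ ¬ (y ↔ z)) :
    ¬ (a ↔ b) ↔ ¬ (x ↔ z) := by
  by_cases a <;> by_cases b <;> by_cases x <;> by_cases y <;> by_cases z <;> simp_all

lemma below_up {p q v w : ℤ × ℤ} (h1 : p ≠ v) (h3 : q ≠ v)
    (hw : w.1 = v.1) (hw' : w.2 = v.2 + 1) : (Below p q v ↔ Below p q w) := by
  have h1 := ne_coord h1
  have h3 := ne_coord h3
  unfold Below
  omega

/-- For a path in `S` from `p` to `q` there is a parity function: `f v` says that the path passes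
an odd number of times below `v` between the columns `v.1` and `v.1 + 1`. Off `S` it changes only
when one crosses the columns of the endpoints. -/
lemma cross_fn {S : Set (ℤ × ℤ)} {p q : ℤ × ℤ} (h : Rch S p q) :
    ∃ f : ℤ × ℤ → Prop,
      (∀ v w, v ∉ S → w ∉ S → w.1 = v.1 + 1 → (w.2 = v.2 ∨ w.2 = v.2 - 1) →
        ((f v ↔ f w) ↔ ((p.1 = w.1 ∧ p.2 < w.2) ↔ (q.1 = w.1 ∧ q.2 < w.2)))) ∧
      (∀ v w, v ∉ S → w.1 = v.1 → w.2 = v.2 + 1 → (f v ↔ f w)) ∧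
      (∀ v, (∀ s ∈ S, v.2 ≤ s.2) → ¬ f v) ∧
      (∀ v, (∀ s ∈ S, s.2 < v.2) → (f v ↔ ¬ (p.1 ≤ v.1 ↔ q.1 ≤ v.1))) := by
  refine h.rec' (P := fun q => ∃ f : ℤ × ℤ → Prop,
      (∀ v w, v ∉ S → w ∉ S → w.1 = v.1 + 1 → (w.2 = v.2 ∨ w.2 = v.2 - 1) →
        ((f v ↔ f w) ↔ ((p.1 = w.1 ∧ p.2 < w.2) ↔ (q.1 = w.1 ∧ q.2 < w.2)))) ∧
      (∀ v w, v ∉ S → w.1 = v.1 → w.2 = v.2 + 1 → (f v ↔ f w)) ∧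
      (∀ v, (∀ s ∈ S, v.2 ≤ s.2) → ¬ f v) ∧
      (∀ v, (∀ s ∈ S, s.2 < v.2) → (f v ↔ ¬ (p.1 ≤ v.1 ↔ q.1 ≤ v.1)))) ?_ ?_
  · intro _
    exact ⟨fun _ => False, by simp, by simp, by simp, by simp⟩
  · rintro q q' hpq ha hq' ⟨f, f1, f2, f3, f4⟩
    have hq := hpq.right
    refine ⟨fun v => ¬ (f v ↔ Below q q' v), ?_, ?_, ?_, ?_⟩
    · intro v w hv hw h1 h2
      have e1 := f1 v w hv hw h1 h2
      have e2 := below_right ha (v := v) (w := w) (by rintro rfl; exact hv hq)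
        (by rintro rfl; exact hw hq) (by rintro rfl; exact hv hq') (by rintro rfl; exact hw hq')
        h1 h2
      exact xor_chain e1 e2
    · intro v w hv h1 h2
      have e1 := f2 v w hv h1 h2
      have e2 := below_up (p := q) (q := q') (v := v) (w := w) (by rintro rfl; exact hv hq)
        (by rintro rfl; exact hv hq') h1 h2
      simp only [e1, e2]
    · intro v hv
      have e1 := f3 v hv
      have e2 : ¬ Below q q' v := by
        have := hv q hq
        have := hv q' hq'
        unfold Below; omega
      simp [e1, e2]
    · intro v hv
      have e1 := f4 v hv
      have e2 : Below q q' v ↔ ¬ (q.1 ≤ v.1 ↔ q'.1 ≤ v.1) := by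
        have := hv q hq
        have := hv q' hq'
        rw [adj_iff] at ha
        unfold Below
        rcases ha with ha | ha | ha | ha | ha | ha <;> omega
      exact xor_chain' e1 e2

/-- A path from `p` to `q` and a path from a lowest to a highest site, which stays in the columns
between `p` and `q`, meet. -/
lemma paths_meet {S1 S2 : Set (ℤ × ℤ)} {p q v0 v1 : ℤ × ℤ} (h1 : Rch S1 p q) (h2 : Rch S2 v0 v1)
    (hc : ∀ v ∈ S2, p.1 ≤ v.1 ∧ v.1 < q.1) (hr : ∀ s ∈ S1, v0.2 ≤ s.2 ∧ s.2 < v1.2) :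
    ∃ v, v ∈ S1 ∧ v ∈ S2 := by
  by_contra hcon
  push Not at hcon
  have hd : ∀ v ∈ S2, v ∉ S1 := fun v h h' => hcon v h' h
  obtain ⟨f, f1, f2, f3, f4⟩ := cross_fn h1
  have inv : f v0 ↔ f v1 := by
    refine h2.rec' (P := fun y => f v0 ↔ f y) (fun _ => Iff.rfl) ?_
    intro y z hy ha hz ih
    have hyS := hy.right
    have c1 := hc _ hyS
    have c2 := hc _ hz
    have step : f y ↔ f z := by
      rw [adj_iff] at ha
      by_cases e1 : z.1 = y.1 + 1
      · refine (f1 y z (hd _ hyS) (hd _ hz) e1 (by omega)).2 ?_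
        omega
      · by_cases e2 : y.1 = z.1 + 1
        · refine ((f1 z y (hd _ hz) (hd _ hyS) e2 (by omega)).2 ?_).symm
          omega
        · by_cases e3 : z.2 = y.2 + 1
          · exact f2 y z (hd _ hyS) (by omega) e3
          · exact (f2 z y (hd _ hz) (by omega) (by omega)).symm
    exact ih.trans step
  have g0 : ¬ f v0 := f3 v0 (fun s hs => (hr s hs).1)
  have g1 : f v1 := by
    rw [f4 v1 (fun s hs => (hr s hs).2)]
    have := hc _ h2.right
    omega
  exact g0 (inv.2 g1)

/-- In a rhombus, a left-right path and a top-bottom path meet. -/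
lemma rhombus_meet {S1 S2 : Set (ℤ × ℤ)} {a0 a1 b0 b1 : ℤ} {p q v0 v1 : ℤ × ℤ}
    (h1 : Rch S1 p q) (h2 : Rch S2 v0 v1)
    (hc : ∀ v ∈ S2, a0 ≤ v.1 ∧ v.1 ≤ a1) (hr : ∀ s ∈ S1, b0 ≤ s.2 ∧ s.2 ≤ b1)
    (hp : p.1 = a0) (hq : q.1 = a1) (hv0 : v0.2 = b0) (hv1 : v1.2 = b1) :
    ∃ v, v ∈ S1 ∧ v ∈ S2 := by
  have k1 : Rch (S1 ∪ {(q.1 + 1, q.2)}) p (q.1 + 1, q.2) :=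
    (h1.mono Set.subset_union_left).tail (by rw [adj_iff]; simp) (by simp)
  have k2 : Rch (S2 ∪ {(v1.1, v1.2 + 1)}) v0 (v1.1, v1.2 + 1) :=
    (h2.mono Set.subset_union_left).tail (by rw [adj_iff]; simp) (by simp)
  have m1 := hc _ h2.right
  have m2 := hr _ h1.right
  obtain ⟨v, hv1', hv2'⟩ := paths_meet k1 k2 (by
      rintro v (hv | rfl)
      · have := hc v hv; simp only; omega
      · simp only; omega) (by
      rintro v (hv | rfl)
      · have := hr v hv; simp only; omega
      · simp only; omega)
  rcases hv1' with h | rfl <;> rcases hv2' with h' | h'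
  · exact ⟨v, h, h'⟩
  · have := hr v h
    simp only [Set.mem_singleton_iff] at h'
    rw [h'] at this; simp only at this; omega
  · have := hc _ h'; simp only at this; omega
  · simp only [Set.mem_singleton_iff, Prod.mk.injEq] at h'; omega

/-- Two bottom-top paths in a strip whose endpoints are ordered oppositely meet. -/
lemma strip_meet {S1 S2 : Set (ℤ × ℤ)} {b0 b1 N : ℤ} {x1 t1 x2 t2 : ℤ × ℤ}
    (h1 : Rch S1 x1 t1) (h2 : Rch S2 x2 t2)
    (hr1 : ∀ v ∈ S1, b0 ≤ v.2 ∧ v.2 ≤ b1) (hr2 : ∀ v ∈ S2, b0 ≤ v.2 ∧ v.2 ≤ b1)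
    (hN : ∀ v ∈ S2, -N ≤ v.1 ∧ v.1 < N)
    (hx1 : x1.2 = b0) (hx2 : x2.2 = b0) (ht1 : t1.2 = b1) (ht2 : t2.2 = b1)
    (hx : x1.1 < x2.1) (ht : t2.1 < t1.1) : ∃ v, v ∈ S1 ∧ v ∈ S2 := by
  have nx := hN _ h2.left
  have nt := hN _ h2.right
  have hb := hr1 _ h1.right
  -- shifting the ends by one row outside the strip lets `S1` be continued to the far left
  -- (below the strip) and to the far right (above it) without meeting `S2`
  set L : Set (ℤ × ℤ) := {v | v.2 = b0 - 1 ∧ v.1 ≤ x1.1} with hL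
  set R : Set (ℤ × ℤ) := {v | v.2 = b1 + 1 ∧ t1.1 ≤ v.1} with hR
  set S1' := S1 ∪ L ∪ R with hS1'
  have k1 : Rch S1' (min (-N) x1.1, b0 - 1) (max N t1.1, b1 + 1) := by
    have a1 : Rch S1' (min (-N) x1.1, b0 - 1) (x1.1, b0 - 1) :=
      rch_row (by omega) (fun c hc1 hc2 => Or.inl (Or.inr ⟨rfl, hc2⟩))
    have a2 : Rch S1' (x1.1, b0 - 1) x1 :=
      Rch.edge a1.right (Or.inl (Or.inl h1.left)) (by rw [adj_iff]; simp; omega)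
    have a3 : Rch S1' x1 t1 := h1.mono (fun v hv => Or.inl (Or.inl hv))
    have a4 : Rch S1' (t1.1, b1 + 1) (max N t1.1, b1 + 1) :=
      rch_row (by omega) (fun c hc1 hc2 => Or.inr ⟨rfl, hc1⟩)
    have a5 : Rch S1' t1 (t1.1, b1 + 1) := Rch.edge a3.right a4.left (by rw [adj_iff]; simp; omega)
    exact (((a1.trans a2).trans a3).trans a5).trans a4
  set E : Set (ℤ × ℤ) := {(x2.1, b0 - 1), (t2.1, b1 + 1), (t2.1, b1 + 2)} with hE
  have k2 : Rch (S2 ∪ E) (x2.1, b0 - 1) (t2.1, b1 + 2) := by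
    have a1 : Rch (S2 ∪ E) (x2.1, b0 - 1) x2 :=
      Rch.edge (by simp [hE]) (Or.inl h2.left) (by rw [adj_iff]; simp; omega)
    have a3 : Rch (S2 ∪ E) x2 t2 := h2.mono Set.subset_union_left
    exact ((a1.trans a3).tail (z := (t2.1, b1 + 1)) (by rw [adj_iff]; simp; omega)
      (by simp [hE])).tail (by rw [adj_iff]; simp; omega) (by simp [hE])
  obtain ⟨v, hv1, hv2⟩ := paths_meet k1 k2 (by
      rintro v (hv | hv)
      · have := hN v hv; simp only; omega
      · simp only [hE, Set.mem_insert_iff, Set.mem_singleton_iff] at hv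
        rcases hv with rfl | rfl | rfl <;> simp only <;> omega) (by
      rintro v ((hv | hv) | hv)
      · have := hr1 v hv; simp only; omega
      · have := hv.1; simp only; omega
      · have := hv.1; simp only; omega)
  simp only [hS1', hE, hL, hR, Set.mem_union, Set.mem_ofPred_eq, Set.mem_insert_iff,
    Set.mem_singleton_iff, Prod.ext_iff] at hv1 hv2
  rcases hv2 with hv2 | hv2
  · rcases hv1 with (hv1 | hv1) | hv1
    · exact ⟨v, hv1, hv2⟩
    · have := hr2 v hv2; omega
    · have := hr2 v hv2; omega
  · rcases hv1 with (hv1 | hv1) | hv1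
    · have := hr1 v hv1; omega
    · omega
    · omega

/-! ### Uniform random subsets of a finite set: Harris and van den Berg–Kesten inequalities -/

/-- The probability of `A` for a uniformly random subset of `W`. -/
def mu (W : Finset (ℤ × ℤ)) (A : Finset (ℤ × ℤ) → Prop) : ℝ :=
  ((W.powerset.filter A).card : ℝ) / 2 ^ W.card

lemma mu_nonneg (W : Finset (ℤ × ℤ)) (A : Finset (ℤ × ℤ) → Prop) : 0 ≤ mu W A := by
  unfold mu; positivity

lemma mu_le_of_inj {W : Finset (ℤ × ℤ)} {A B : Finset (ℤ × ℤ) → Prop} (Φ : Finset (ℤ × ℤ) → Finset (ℤ × ℤ))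
    (h1 : ∀ ω ⊆ W, A ω → Φ ω ⊆ W ∧ B (Φ ω))
    (h2 : ∀ ω ⊆ W, ∀ ω' ⊆ W, A ω → A ω' → Φ ω = Φ ω' → ω = ω') : mu W A ≤ mu W B := by
  unfold mu
  refine div_le_div_of_nonneg_right (Nat.cast_le.2 ?_) (by positivity)
  refine Finset.card_le_card_of_injOn Φ ?_ ?_
  · intro ω hω
    simp only [Finset.coe_filter, Finset.mem_powerset, Set.mem_ofPred_eq] at hω ⊢
    exact h1 ω hω.1 hω.2
  · intro ω hω ω' hω' h
    simp only [Finset.coe_filter, Finset.mem_powerset, Set.mem_ofPred_eq] at hω hω'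
    exact h2 ω hω.1 ω' hω'.1 hω.2 hω'.2 h

lemma mu_mono {W : Finset (ℤ × ℤ)} {A B : Finset (ℤ × ℤ) → Prop} (h : ∀ ω ⊆ W, A ω → B ω) :
    mu W A ≤ mu W B :=
  mu_le_of_inj id (fun ω hω ha => ⟨hω, h ω hω ha⟩) (fun _ _ _ _ _ _ h => h)

lemma mu_congr {W : Finset (ℤ × ℤ)} {A B : Finset (ℤ × ℤ) → Prop} (h : ∀ ω ⊆ W, A ω ↔ B ω) :
    mu W A = mu W B :=
  le_antisymm (mu_mono fun ω hω => (h ω hω).1) (mu_mono fun ω hω => (h ω hω).2)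

lemma mu_or_add_and (W : Finset (ℤ × ℤ)) (A B : Finset (ℤ × ℤ) → Prop) :
    mu W (fun ω => A ω ∨ B ω) + mu W (fun ω => A ω ∧ B ω) = mu W A + mu W B := by
  unfold mu
  rw [← add_div, ← add_div]
  congr 1
  have := Finset.card_union_add_card_inter (W.powerset.filter A) (W.powerset.filter B)
  rw [← Finset.filter_or, ← Finset.filter_and] at this
  norm_cast
  convert this

lemma mu_true (W : Finset (ℤ × ℤ)) : mu W (fun _ => True) = 1 := by
  unfold mu
  simp

lemma mu_not (W : Finset (ℤ × ℤ)) (A : Finset (ℤ × ℤ) → Prop) :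
    mu W (fun ω => ¬ A ω) = 1 - mu W A := by
  have h := mu_or_add_and W A (fun ω => ¬ A ω)
  have h1 : mu W (fun ω => A ω ∨ ¬ A ω) = 1 := by
    rw [← mu_true W]; exact mu_congr (fun ω _ => by simp [em])
  have h2 : mu W (fun ω => A ω ∧ ¬ A ω) = 0 := by unfold mu; simp
  linarith

lemma mu_empty (A : Finset (ℤ × ℤ) → Prop) : mu ∅ A = if A ∅ then 1 else 0 := by
  unfold mu
  simp only [Finset.powerset_empty, Finset.card_empty, pow_zero, div_one, Finset.filter_singleton]
  split_ifs <;> simp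

/-- Conditioning on whether a given site belongs to the random set. -/
lemma mu_insert {a : ℤ × ℤ} {W : Finset (ℤ × ℤ)} (ha : a ∉ W) (A : Finset (ℤ × ℤ) → Prop) :
    mu (insert a W) A = (mu W A + mu W (fun ω => A (insert a ω))) / 2 := by
  unfold mu
  rw [Finset.card_insert_of_notMem ha, Finset.powerset_insert, Finset.filter_union,
    Finset.card_union_of_disjoint, Finset.filter_image, Finset.card_image_of_injOn]
  · push_cast; field_simp; ring
  · intro ω hω ω' hω' h
    simp only [Finset.coe_filter, Finset.mem_powerset, Set.mem_ofPred_eq] at hω hω'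
    have h1 : a ∉ ω := fun h => ha (hω.1 h)
    have h2 : a ∉ ω' := fun h => ha (hω'.1 h)
    rw [← Finset.erase_insert h1, ← Finset.erase_insert h2, h]
  · rw [Finset.disjoint_left]
    intro ω hω hω'
    simp only [Finset.mem_filter, Finset.mem_powerset, Finset.mem_image] at hω hω'
    obtain ⟨⟨x, _, rfl⟩, _⟩ := hω'
    exact ha (hω.1 (Finset.mem_insert_self _ _))

/-- Increasing events. -/
def Inc (A : Finset (ℤ × ℤ) → Prop) : Prop := ∀ ω ω', ω ⊆ ω' → A ω → A ω'

lemma Inc.insert {A : Finset (ℤ × ℤ) → Prop} (h : Inc A) (a : ℤ × ℤ) : Inc (fun ω => A (insert a ω)) :=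
  fun _ _ hs => h _ _ (Finset.insert_subset_insert _ hs)

/-- Harris' inequality, for complements of increasing events. -/
lemma harris (W : Finset (ℤ × ℤ)) : ∀ {A B : Finset (ℤ × ℤ) → Prop}, Inc A → Inc B →
    mu W (fun ω => ¬ A ω) * mu W (fun ω => ¬ B ω) ≤ mu W (fun ω => ¬ A ω ∧ ¬ B ω) := by
  induction W using Finset.induction_on with
  | empty =>
    intro A B _ _
    rw [mu_empty, mu_empty, mu_empty]
    by_cases A ∅ <;> by_cases B ∅ <;> simp_all
  | insert a W ha ih =>
    intro A B hA hB
    rw [mu_insert ha, mu_insert ha, mu_insert ha]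
    have h0 := ih hA hB
    have h1 := ih (hA.insert a) (hB.insert a)
    have hx : mu W (fun ω => ¬ A (insert a ω)) ≤ mu W (fun ω => ¬ A ω) :=
      mu_mono fun ω _ h h' => h (hA _ _ (Finset.subset_insert _ _) h')
    have hy : mu W (fun ω => ¬ B (insert a ω)) ≤ mu W (fun ω => ¬ B ω) :=
      mu_mono fun ω _ h h' => h (hB _ _ (Finset.subset_insert _ _) h')
    nlinarith [mul_nonneg (sub_nonneg.2 hx) (sub_nonneg.2 hy)]

/-- Disjoint occurrence of two (increasing) events. -/
def Box (A B : Finset (ℤ × ℤ) → Prop) (ω : Finset (ℤ × ℤ)) : Prop :=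
  ∃ S T, Disjoint S T ∧ S ⊆ ω ∧ T ⊆ ω ∧ A S ∧ B T

lemma Box.inc (A B : Finset (ℤ × ℤ) → Prop) : Inc (Box A B) := by
  rintro ω ω' h ⟨S, T, h1, h2, h3, h4⟩
  exact ⟨S, T, h1, h2.trans h, h3.trans h, h4⟩

lemma Box.mono {A A' B B' : Finset (ℤ × ℤ) → Prop} (hA : ∀ ω, A ω → A' ω) (hB : ∀ ω, B ω → B' ω)
    {ω : Finset (ℤ × ℤ)} (h : Box A B ω) : Box A' B' ω := by
  obtain ⟨S, T, h1, h2, h3, h4, h5⟩ := h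
  exact ⟨S, T, h1, h2, h3, hA _ h4, hB _ h5⟩

lemma Box.of_insert {A B : Finset (ℤ × ℤ) → Prop} (hA : Inc A) {a : ℤ × ℤ} {ω : Finset (ℤ × ℤ)}
    (h : Box A B (insert a ω)) :
    Box (fun ω => A (insert a ω)) B ω ∨ Box A (fun ω => B (insert a ω)) ω := by
  obtain ⟨S, T, h1, h2, h3, h4, h5⟩ := h
  rw [Finset.disjoint_left] at h1
  have sub : ∀ {X : Finset (ℤ × ℤ)}, X ⊆ insert a ω → X.erase a ⊆ ω := by
    intro X hX x hx
    rw [Finset.mem_erase] at hx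
    exact (Finset.mem_insert.1 (hX hx.2)).resolve_left hx.1
  by_cases haT : a ∈ T
  · right
    have haS : a ∉ S := fun h => h1 h haT
    refine ⟨S, T.erase a, ?_, ?_, sub h3, h4, ?_⟩
    · rw [Finset.disjoint_left]
      exact fun x hx hx' => h1 hx (Finset.mem_of_mem_erase hx')
    · have := sub h2; rwa [Finset.erase_eq_of_notMem haS] at this
    · simpa only [Finset.insert_erase haT] using h5
  · left
    refine ⟨S.erase a, T, ?_, sub h2, ?_, ?_, h5⟩
    · rw [Finset.disjoint_left]
      exact fun x hx hx' => h1 (Finset.mem_of_mem_erase hx) hx'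
    · have := sub h3; rwa [Finset.erase_eq_of_notMem haT] at this
    · refine hA _ _ (fun x hx => ?_) h4
      by_cases hxa : x = a
      · simp [hxa]
      · simp [hxa, hx]

/-- The van den Berg–Kesten inequality for increasing events. -/
lemma bk (W : Finset (ℤ × ℤ)) : ∀ {A B : Finset (ℤ × ℤ) → Prop}, Inc A → Inc B →
    mu W (Box A B) ≤ mu W A * mu W B := by
  induction W using Finset.induction_on with
  | empty =>
    intro A B _ _
    rw [mu_empty, mu_empty, mu_empty]
    have : Box A B ∅ → A ∅ ∧ B ∅ := by
      rintro ⟨S, T, h1, h2, h3, h4, h5⟩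
      rw [Finset.subset_empty] at h2 h3
      subst h2; subst h3
      exact ⟨h4, h5⟩
    by_cases A ∅ <;> by_cases B ∅ <;> by_cases Box A B ∅ <;> simp_all
  | insert a W ha ih =>
    intro A B hA hB
    rw [mu_insert ha, mu_insert ha, mu_insert ha]
    have up : ∀ {C : Finset (ℤ × ℤ) → Prop}, Inc C → ∀ ω, C ω → C (insert a ω) :=
      fun hC ω h => hC _ _ (Finset.subset_insert _ _) h
    have h10 := ih (hA.insert a) hB
    have h01 := ih hA (hB.insert a)
    -- both box events on the right contain `Box A B`, which therefore cancels
    have hor := mu_or_add_and W (Box (fun ω => A (insert a ω)) B)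
      (Box A (fun ω => B (insert a ω)))
    have hand : mu W (Box A B) ≤ mu W (fun ω => Box (fun ω => A (insert a ω)) B ω ∧
        Box A (fun ω => B (insert a ω)) ω) :=
      mu_mono fun ω _ h => ⟨h.mono (up hA) (fun _ => id), h.mono (fun _ => id) (up hB)⟩
    have hins : mu W (fun ω => Box A B (insert a ω)) ≤
        mu W (fun ω => Box (fun ω => A (insert a ω)) B ω ∨ Box A (fun ω => B (insert a ω)) ω) :=
      mu_mono fun ω _ h => h.of_insert hA
    have hx : mu W A ≤ mu W (fun ω => A (insert a ω)) := mu_mono fun ω _ h => up hA ω h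
    have hy : mu W B ≤ mu W (fun ω => B (insert a ω)) := mu_mono fun ω _ h => up hB ω h
    nlinarith [mul_nonneg (sub_nonneg.2 hx) (sub_nonneg.2 hy)]

/-- `k` disjoint occurrences of the event `A`. -/
def DisjOcc (A : Finset (ℤ × ℤ) → Prop) : ℕ → Finset (ℤ × ℤ) → Prop
  | 0 => fun _ => True
  | k + 1 => Box A (DisjOcc A k)

lemma DisjOcc.inc (A : Finset (ℤ × ℤ) → Prop) : ∀ k, Inc (DisjOcc A k)
  | 0 => fun _ _ _ _ => trivial
  | _ + 1 => Box.inc _ _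

lemma mu_disjOcc_le {W : Finset (ℤ × ℤ)} {A : Finset (ℤ × ℤ) → Prop} (hA : Inc A) (k : ℕ) :
    mu W (DisjOcc A k) ≤ mu W A ^ k := by
  induction k with
  | zero => simp [DisjOcc, mu_true]
  | succ k ih =>
    rw [pow_succ']
    exact (bk W hA (DisjOcc.inc A k)).trans (mul_le_mul_of_nonneg_left ih (mu_nonneg _ _))

lemma disjOcc_of_family {ι : Type*} {A : Finset (ℤ × ℤ) → Prop} (J : Finset ι) (F : ι → Finset (ℤ × ℤ))
    (hA : ∀ i ∈ J, A (F i)) (hd : ∀ i ∈ J, ∀ j ∈ J, i ≠ j → Disjoint (F i) (F j)) :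
    DisjOcc A J.card (J.biUnion F) := by
  induction J using Finset.induction_on with
  | empty => trivial
  | insert i J hi ih =>
    rw [Finset.card_insert_of_notMem hi]
    refine ⟨F i, J.biUnion F, ?_, ?_, ?_, hA i (Finset.mem_insert_self _ _),
      ih (fun j hj => hA j (Finset.mem_insert_of_mem hj)) (fun j hj k hk =>
        hd j (Finset.mem_insert_of_mem hj) k (Finset.mem_insert_of_mem hk))⟩
    · rw [Finset.disjoint_biUnion_right]
      exact fun j hj => hd i (Finset.mem_insert_self _ _) j (Finset.mem_insert_of_mem hj)
        (fun h => hi (h ▸ hj))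
    · exact Finset.subset_biUnion_of_mem F (Finset.mem_insert_self _ _)
    · exact Finset.biUnion_subset_biUnion_of_subset_left _ (Finset.subset_insert _ _)

lemma mu_mono_set {V W : Finset (ℤ × ℤ)} (hVW : V ⊆ W) {A : Finset (ℤ × ℤ) → Prop} (hA : Inc A) :
    mu V A ≤ mu W A := by
  have key : ∀ X : Finset (ℤ × ℤ), mu V A ≤ mu (X ∪ V) A := by
    intro X
    induction X using Finset.induction_on with
    | empty => simp
    | insert a X _ ih =>
      rw [Finset.insert_union]
      by_cases ha : a ∈ X ∪ V
      · rwa [Finset.insert_eq_of_mem ha]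
      · rw [mu_insert ha]
        have : mu (X ∪ V) A ≤ mu (X ∪ V) (fun ω => A (insert a ω)) :=
          mu_mono fun ω _ h => hA _ _ (Finset.subset_insert _ _) h
        linarith
  have := key W
  rwa [Finset.union_eq_left.2 hVW] at this

/-! ### Rhombi and rectangles; self-duality -/

/-- The rhombus with `h` sites per side and lowest left corner `(a0, b0)`. -/
def Rho (a0 b0 h : ℤ) : Set (ℤ × ℤ) :=
  {v | (a0 ≤ v.1 ∧ v.1 < a0 + h) ∧ b0 ≤ v.2 ∧ v.2 < b0 + h}

/-- `S` contains a left-right crossing of the rhombus. -/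
def LR (a0 b0 h : ℤ) (S : Set (ℤ × ℤ)) : Prop :=
  ∃ p q, p.1 = a0 ∧ q.1 = a0 + h - 1 ∧ Rch (S ∩ Rho a0 b0 h) p q

/-- `S` contains a bottom-top crossing of the rhombus. -/
def BT (a0 b0 h : ℤ) (S : Set (ℤ × ℤ)) : Prop :=
  ∃ p q, p.2 = b0 ∧ q.2 = b0 + h - 1 ∧ Rch (S ∩ Rho a0 b0 h) p q

/-- The rectangle formed by the sites of the rows `b0, …, b0 + h - 1` for which
`X0 ≤ 2 * a + b < X0 + m`; the number `2 * a + b` is twice the Euclidean abscissa of `(a, b)`. -/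
def Rect (X0 m b0 h : ℤ) : Set (ℤ × ℤ) :=
  {v | (b0 ≤ v.2 ∧ v.2 < b0 + h) ∧ X0 ≤ 2 * v.1 + v.2 ∧ 2 * v.1 + v.2 < X0 + m}

/-- `S` contains a bottom-top crossing of the rectangle. -/
def TB (X0 m b0 h : ℤ) (S : Set (ℤ × ℤ)) : Prop :=
  ∃ p q, p.2 = b0 ∧ q.2 = b0 + h - 1 ∧ Rch (S ∩ Rect X0 m b0 h) p q

/-- A finite set of sites containing prescribed bounded sets. -/
lemma exists_finset_of_bdd (R : Set (ℤ × ℤ)) (N : ℤ)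
    (h : ∀ v ∈ R, (-N ≤ v.1 ∧ v.1 ≤ N) ∧ -N ≤ v.2 ∧ v.2 ≤ N) (W : Finset (ℤ × ℤ)) :
    ∃ W' : Finset (ℤ × ℤ), W ⊆ W' ∧ R ⊆ (W' : Set (ℤ × ℤ)) := by
  refine ⟨W ∪ (Finset.Icc (-N) N ×ˢ Finset.Icc (-N) N), Finset.subset_union_left, ?_⟩
  intro v hv
  simp only [Finset.coe_union, Set.mem_union, Finset.mem_coe, Finset.mem_product, Finset.mem_Icc]
  exact Or.inr (h v hv)

lemma LR.mono {a0 b0 h : ℤ} {S S' : Set (ℤ × ℤ)} (hS : S ⊆ S') (hL : LR a0 b0 h S) :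
    LR a0 b0 h S' := by
  obtain ⟨p, q, hp, hq, hr⟩ := hL
  exact ⟨p, q, hp, hq, hr.mono (Set.inter_subset_inter_left _ hS)⟩

lemma BT.mono {a0 b0 h : ℤ} {S S' : Set (ℤ × ℤ)} (hS : S ⊆ S') (hL : BT a0 b0 h S) :
    BT a0 b0 h S' := by
  obtain ⟨p, q, hp, hq, hr⟩ := hL
  exact ⟨p, q, hp, hq, hr.mono (Set.inter_subset_inter_left _ hS)⟩

lemma TB.mono {X0 m b0 h : ℤ} {S S' : Set (ℤ × ℤ)} (hS : S ⊆ S') (hL : TB X0 m b0 h S) :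
    TB X0 m b0 h S' := by
  obtain ⟨p, q, hp, hq, hr⟩ := hL
  exact ⟨p, q, hp, hq, hr.mono (Set.inter_subset_inter_left _ hS)⟩

lemma inc_of_mono {Q : Set (ℤ × ℤ) → Prop} (h : ∀ S S' : Set (ℤ × ℤ), S ⊆ S' → Q S → Q S') :
    Inc (fun ω : Finset (ℤ × ℤ) => Q (ω : Set (ℤ × ℤ))) :=
  fun _ _ hs => h _ _ (Finset.coe_subset.2 hs)

/-- The configuration obtained from `ω` by replacing its restriction to `U` by the complement of
its reflection under `ρ`. -/
def flip (W : Finset (ℤ × ℤ)) (U : Set (ℤ × ℤ)) (ρ : ℤ × ℤ → ℤ × ℤ) (ω : Finset (ℤ × ℤ)) :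
    Finset (ℤ × ℤ) :=
  W.filter fun v => if v ∈ U then ρ v ∉ ω else v ∈ ω

lemma mem_flip_of_mem {W : Finset (ℤ × ℤ)} {U : Set (ℤ × ℤ)} {ρ : ℤ × ℤ → ℤ × ℤ}
    {ω : Finset (ℤ × ℤ)} (hU : U ⊆ (W : Set (ℤ × ℤ))) {v : ℤ × ℤ} (hv : v ∈ U) :
    v ∈ flip W U ρ ω ↔ ρ v ∉ ω := by
  have : v ∈ W := hU hv
  simp [flip, hv, this]

lemma mem_flip_of_notMem {W : Finset (ℤ × ℤ)} {U : Set (ℤ × ℤ)} {ρ : ℤ × ℤ → ℤ × ℤ}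
    {ω : Finset (ℤ × ℤ)} (hω : ω ⊆ W) {v : ℤ × ℤ} (hv : v ∉ U) :
    v ∈ flip W U ρ ω ↔ v ∈ ω := by
  simp only [flip, Finset.mem_filter, hv, if_false]
  exact ⟨fun h => h.2, fun h => ⟨hω h, h⟩⟩

lemma flip_subset (W : Finset (ℤ × ℤ)) (U : Set (ℤ × ℤ)) (ρ : ℤ × ℤ → ℤ × ℤ)
    (ω : Finset (ℤ × ℤ)) : flip W U ρ ω ⊆ W := Finset.filter_subset _ _

lemma flip_flip {W : Finset (ℤ × ℤ)} {U : Set (ℤ × ℤ)} {ρ : ℤ × ℤ → ℤ × ℤ}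
    {ω : Finset (ℤ × ℤ)} (hU : U ⊆ (W : Set (ℤ × ℤ))) (hρ : ∀ v, ρ (ρ v) = v)
    (hρU : ∀ v ∈ U, ρ v ∈ U) (hω : ω ⊆ W) : flip W U ρ (flip W U ρ ω) = ω := by
  ext v
  by_cases hv : v ∈ U
  · rw [mem_flip_of_mem hU hv, mem_flip_of_mem hU (hρU v hv), hρ, not_not]
  · rw [mem_flip_of_notMem (flip_subset _ _ _ _) hv, mem_flip_of_notMem hω hv]

/-- An event which excludes its image under a flip has probability at most `1/2`. -/
lemma mu_le_half_of_flip {W : Finset (ℤ × ℤ)} {U : Set (ℤ × ℤ)} {ρ : ℤ × ℤ → ℤ × ℤ}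
    (hU : U ⊆ (W : Set (ℤ × ℤ))) (hρ : ∀ v, ρ (ρ v) = v) (hρU : ∀ v ∈ U, ρ v ∈ U)
    {A : Finset (ℤ × ℤ) → Prop} (hA : ∀ ω ⊆ W, A ω → ¬ A (flip W U ρ ω)) :
    mu W A ≤ 1 / 2 := by
  have h1 : mu W A ≤ mu W (fun ω => ¬ A ω) := by
    refine mu_le_of_inj (flip W U ρ) (fun ω hω h => ⟨flip_subset _ _ _ _, hA ω hω h⟩) ?_
    intro ω hω ω' hω' _ _ h
    rw [← flip_flip hU hρ hρU hω, ← flip_flip hU hρ hρU hω', h]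
  rw [mu_not] at h1
  linarith

/-- The reflection of the rhombus in its diagonal. -/
def tau (a0 b0 : ℤ) (v : ℤ × ℤ) : ℤ × ℤ := (a0 + v.2 - b0, b0 + v.1 - a0)

lemma tau_tau (a0 b0 : ℤ) (v : ℤ × ℤ) : tau a0 b0 (tau a0 b0 v) = v := by
  ext <;> simp [tau]

lemma tau_adj (a0 b0 : ℤ) (u v : ℤ × ℤ) (h : Adj u v) : Adj (tau a0 b0 u) (tau a0 b0 v) := by
  rw [adj_iff] at h ⊢; simp only [tau]; omega

lemma tau_rho {a0 b0 h : ℤ} (v : ℤ × ℤ) (hv : v ∈ Rho a0 b0 h) : tau a0 b0 v ∈ Rho a0 b0 h := by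
  obtain ⟨⟨h1, h2⟩, h3, h4⟩ := hv
  refine ⟨⟨?_, ?_⟩, ?_, ?_⟩ <;> simp only [tau] <;> omega

lemma rho_bdd (a0 b0 h : ℤ) : ∃ N : ℤ, ∀ v ∈ Rho a0 b0 h,
    (-N ≤ v.1 ∧ v.1 ≤ N) ∧ -N ≤ v.2 ∧ v.2 ≤ N := by
  refine ⟨|a0| + |b0| + |h|, fun v hv => ?_⟩
  obtain ⟨⟨h1, h2⟩, h3, h4⟩ := hv
  have := abs_le.1 (le_refl |a0|)
  have := abs_le.1 (le_refl |b0|)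
  have := abs_le.1 (le_refl |h|)
  omega

lemma rect_bdd (X0 m b0 h : ℤ) : ∃ N : ℤ, ∀ v ∈ Rect X0 m b0 h,
    (-N ≤ v.1 ∧ v.1 ≤ N) ∧ -N ≤ v.2 ∧ v.2 ≤ N := by
  refine ⟨|X0| + |b0| + |h| + |m|, fun v hv => ?_⟩
  obtain ⟨⟨h1, h2⟩, h3, h4⟩ := hv
  have := abs_le.1 (le_refl |X0|)
  have := abs_le.1 (le_refl |b0|)
  have := abs_le.1 (le_refl |h|)
  have := abs_le.1 (le_refl |m|)
  omega

/-- Open left-right crossings and closed bottom-top crossings exclude each other. -/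
lemma mu_LR_le (a0 b0 h : ℤ) (W : Finset (ℤ × ℤ)) :
    mu W (fun ω => LR a0 b0 h (ω : Set (ℤ × ℤ))) ≤ 1 / 2 := by
  obtain ⟨N, hN⟩ := rho_bdd a0 b0 h
  obtain ⟨W', h1, h2⟩ := exists_finset_of_bdd _ N hN W
  refine (mu_mono_set h1 (inc_of_mono fun _ _ => LR.mono)).trans ?_
  refine mu_le_half_of_flip h2 (tau_tau a0 b0) tau_rho ?_
  rintro ω hω ⟨p, q, hp, hq, hr⟩ ⟨p', q', hp', hq', hr'⟩
  have k := hr'.map (S' := {v | v ∉ ω ∧ v ∈ Rho a0 b0 h}) (tau a0 b0) (tau_adj a0 b0) (by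
    rintro v ⟨hv, hv'⟩
    exact ⟨(mem_flip_of_mem h2 hv').1 hv, tau_rho v hv'⟩)
  obtain ⟨v, hv, hv'⟩ := rhombus_meet (b0 := b0) (b1 := b0 + h - 1) (a0 := a0) (a1 := a0 + h - 1)
    hr k (fun v hv => by have := hv.2.1; omega) (fun v hv => by have := hv.2.2; omega)
    hp hq (by simp only [tau]; omega) (by simp only [tau]; omega)
  exact hv'.1 hv.1

lemma mu_BT_le (a0 b0 h : ℤ) (W : Finset (ℤ × ℤ)) :
    mu W (fun ω => BT a0 b0 h (ω : Set (ℤ × ℤ))) ≤ 1 / 2 := by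
  obtain ⟨N, hN⟩ := rho_bdd a0 b0 h
  obtain ⟨W', h1, h2⟩ := exists_finset_of_bdd _ N hN W
  refine (mu_mono_set h1 (inc_of_mono fun _ _ => BT.mono)).trans ?_
  refine mu_le_half_of_flip h2 (tau_tau a0 b0) tau_rho ?_
  rintro ω hω ⟨p, q, hp, hq, hr⟩ ⟨p', q', hp', hq', hr'⟩
  have k := hr'.map (S' := {v | v ∉ ω ∧ v ∈ Rho a0 b0 h}) (tau a0 b0) (tau_adj a0 b0) (by
    rintro v ⟨hv, hv'⟩
    exact ⟨(mem_flip_of_mem h2 hv').1 hv, tau_rho v hv'⟩)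
  obtain ⟨v, hv, hv'⟩ := rhombus_meet (b0 := b0) (b1 := b0 + h - 1) (a0 := a0) (a1 := a0 + h - 1)
    k hr (fun v hv => by have := hv.2.1; omega) (fun v hv => by have := hv.2.2; omega)
    (by simp only [tau]; omega) (by simp only [tau]; omega) hp hq
  exact hv.1 hv'.1

/-- A narrow rectangle is contained in a rhombus of the same height. -/
lemma mu_TB_le (X0 b0 h : ℤ) (W : Finset (ℤ × ℤ)) :
    mu W (fun ω => TB X0 (h - 1) b0 h (ω : Set (ℤ × ℤ))) ≤ 1 / 2 := by
  refine le_trans (mu_mono ?_) (mu_BT_le ((X0 - b0 - h + 2) / 2) b0 h W)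
  rintro ω - ⟨p, q, hp, hq, hr⟩
  refine ⟨p, q, hp, hq, hr.mono ?_⟩
  rintro v ⟨hv, ⟨h1, h2⟩, h3, h4⟩
  exact ⟨hv, ⟨by omega, by omega⟩, h1, h2⟩

/-! ### Doubling the width of a rectangle -/

/-- The reflection in the vertical axis of doubled abscissa `k`. -/
def mir (k : ℤ) (v : ℤ × ℤ) : ℤ × ℤ := (k - v.1 - v.2, v.2)

lemma mir_mir (k : ℤ) (v : ℤ × ℤ) : mir k (mir k v) = v := by
  ext
  · simp only [mir]; ring
  · rfl

lemma mir_adj (k : ℤ) (u v : ℤ × ℤ) (h : Adj u v) : Adj (mir k u) (mir k v) := by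
  rw [adj_iff] at h ⊢; simp only [mir]; omega

/-- The sites joined to the top row of the rectangle by a path in `S`. -/
def Hang (X0 m b0 h : ℤ) (S : Set (ℤ × ℤ)) : Set (ℤ × ℤ) :=
  {v | ∃ t, t.2 = b0 + h - 1 ∧ Rch (S ∩ Rect X0 m b0 h) t v}

/-- The sites of the rectangle examined when `Hang` is explored from the top row. -/
def Expl (X0 m b0 h : ℤ) (S : Set (ℤ × ℤ)) : Set (ℤ × ℤ) :=
  {v | v ∈ Rect X0 m b0 h ∧ (v.2 = b0 + h - 1 ∨ v ∈ Hang X0 m b0 h S ∨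
    ∃ d ∈ Hang X0 m b0 h S, Adj d v)}

/-- The sites of the doubled rectangle that are neither examined nor mirror images of examined
sites. -/
def Unex (X0 m b0 h : ℤ) (S : Set (ℤ × ℤ)) : Set (ℤ × ℤ) :=
  {v | v ∈ Rect X0 (2 * m + 1) b0 h ∧ v ∉ Expl X0 m b0 h S ∧
    mir (X0 + m) v ∉ Expl X0 m b0 h S}

/-- In the unexamined region, a path of `S` leads from the left half of the bottom row to the
mirror image of the examined region. -/
def Reach (X0 m b0 h : ℤ) (S : Set (ℤ × ℤ)) : Prop :=
  ∃ x y e, x.2 = b0 ∧ 2 * x.1 + x.2 ≤ X0 + m ∧ Rch (S ∩ Unex X0 m b0 h S) x y ∧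
    Adj y e ∧ mir (X0 + m) e ∈ Expl X0 m b0 h S

section Doubling

variable {X0 m b0 h : ℤ} {S S' : Set (ℤ × ℤ)}

lemma hang_mem {v : ℤ × ℤ} (hv : v ∈ Hang X0 m b0 h S) : v ∈ S ∧ v ∈ Rect X0 m b0 h := by
  obtain ⟨t, _, hr⟩ := hv
  exact hr.right

lemma hang_expl {v : ℤ × ℤ} (hv : v ∈ Hang X0 m b0 h S) : v ∈ Expl X0 m b0 h S :=
  ⟨(hang_mem hv).2, Or.inr (Or.inl hv)⟩

lemma expl_hang {v : ℤ × ℤ} (hv : v ∈ Expl X0 m b0 h S) (hS : v ∈ S) : v ∈ Hang X0 m b0 h S := by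
  obtain ⟨h1, h2 | h2 | ⟨d, ⟨t, ht, hr⟩, ha⟩⟩ := hv
  · exact ⟨v, h2, Rch.refl ⟨hS, h1⟩⟩
  · exact h2
  · exact ⟨t, ht, hr.tail ha ⟨hS, h1⟩⟩

/-- The explored cluster is determined by the configuration on the examined region. -/
lemma hang_congr (hSS : ∀ v ∈ Expl X0 m b0 h S, v ∈ S ↔ v ∈ S') :
    Hang X0 m b0 h S' = Hang X0 m b0 h S := by
  ext v
  constructor
  · rintro ⟨t, ht, hr⟩
    refine hr.rec' (P := fun v => v ∈ Hang X0 m b0 h S) ?_ ?_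
    · intro h1
      have : t ∈ Expl X0 m b0 h S := ⟨h1.2, Or.inl ht⟩
      exact expl_hang this ((hSS t this).2 h1.1)
    · intro y z _ ha hz ih
      have : z ∈ Expl X0 m b0 h S := ⟨hz.2, Or.inr (Or.inr ⟨y, ih, ha⟩)⟩
      exact expl_hang this ((hSS z this).2 hz.1)
  · rintro ⟨t, ht, hr⟩
    refine ⟨t, ht, hr.comp.mono ?_⟩
    intro w hw
    have hw' : w ∈ Hang X0 m b0 h S := ⟨t, ht, hw⟩
    have := hang_mem hw'
    exact ⟨(hSS w (hang_expl hw')).1 this.1, this.2⟩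

lemma expl_congr (hSS : Hang X0 m b0 h S' = Hang X0 m b0 h S) :
    Expl X0 m b0 h S' = Expl X0 m b0 h S := by
  unfold Expl; rw [hSS]

lemma unex_congr (hSS : Hang X0 m b0 h S' = Hang X0 m b0 h S) :
    Unex X0 m b0 h S' = Unex X0 m b0 h S := by
  unfold Unex; rw [expl_congr hSS]

lemma TB_iff_hang : TB X0 m b0 h S ↔ ∃ v ∈ Hang X0 m b0 h S, v.2 = b0 := by
  constructor
  · rintro ⟨p, q, hp, hq, hr⟩
    exact ⟨p, ⟨q, hq, hr.symm⟩, hp⟩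
  · rintro ⟨v, ⟨t, ht, hr⟩, hv⟩
    exact ⟨v, t, hv, ht, hr.symm⟩

/-- Every examined site is joined to the top row inside the examined region. -/
lemma expl_top {v : ℤ × ℤ} (hv : v ∈ Expl X0 m b0 h S) :
    ∃ t, t.2 = b0 + h - 1 ∧ Rch (Expl X0 m b0 h S) v t := by
  have key : ∀ d ∈ Hang X0 m b0 h S, ∃ t, t.2 = b0 + h - 1 ∧ Rch (Expl X0 m b0 h S) d t := by
    rintro d ⟨t, ht, hr⟩
    exact ⟨t, ht, (hr.comp.mono fun w hw => hang_expl ⟨t, ht, hw⟩).symm⟩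
  have hv0 := hv
  obtain ⟨h1, h2 | h2 | ⟨d, hd, ha⟩⟩ := hv
  · exact ⟨v, h2, Rch.refl hv0⟩
  · exact key v h2
  · obtain ⟨t, ht, hr⟩ := key d hd
    exact ⟨t, ht, (Rch.edge hv0 (hang_expl hd) ha.symm).trans hr⟩

lemma rect_rfl {v : ℤ × ℤ} (hv : v ∈ Rect X0 (2 * m + 1) b0 h) :
    mir (X0 + m) v ∈ Rect X0 (2 * m + 1) b0 h := by
  obtain ⟨⟨h1, h2⟩, h3, h4⟩ := hv
  refine ⟨⟨?_, ?_⟩, ?_, ?_⟩ <;> simp only [mir] <;> omega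

lemma unex_rfl (v : ℤ × ℤ) (hv : v ∈ Unex X0 m b0 h S) : mir (X0 + m) v ∈ Unex X0 m b0 h S := by
  obtain ⟨h1, h2, h3⟩ := hv
  exact ⟨rect_rfl h1, h3, by rwa [mir_mir]⟩

/-- The event `Reach` excludes its image under the flip of the unexamined region: the two paths,
one of them reflected, would be prolonged through the examined region and its mirror image to a
pair of paths which have to cross. -/
lemma not_reach_flip {W ω : Finset (ℤ × ℤ)} (hW : Rect X0 (2 * m + 1) b0 h ⊆ (W : Set (ℤ × ℤ)))
    (hSS : Hang X0 m b0 h (flip W (Unex X0 m b0 h ω) (mir (X0 + m)) ω) = Hang X0 m b0 h ω)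
    (h1 : Reach X0 m b0 h (ω : Set (ℤ × ℤ))) :
    ¬ Reach X0 m b0 h (flip W (Unex X0 m b0 h ω) (mir (X0 + m)) ω : Set (ℤ × ℤ)) := by
  intro h2
  have hUW : Unex X0 m b0 h ω ⊆ (W : Set (ℤ × ℤ)) := fun v hv => hW hv.1
  unfold Reach at h2
  rw [expl_congr hSS, unex_congr hSS] at h2
  obtain ⟨x, y, e, hx, hxk, hr, ha, he⟩ := h1
  obtain ⟨x', y', e', hx', hxk', hr', ha', he'⟩ := h2
  set E := Expl X0 m b0 h (ω : Set (ℤ × ℤ)) with hE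
  set U := Unex X0 m b0 h (ω : Set (ℤ × ℤ)) with hU
  have hUE : ∀ v ∈ U, v ∈ E → False := fun v hv => hv.2.1
  have hUE' : ∀ v ∈ U, mir (X0 + m) v ∈ E → False := fun v hv => hv.2.2
  have hER : ∀ v ∈ E, v ∈ Rect X0 m b0 h := fun v hv => hv.1
  have hUR : ∀ v ∈ U, v ∈ Rect X0 (2 * m + 1) b0 h := fun v hv => hv.1
  obtain ⟨t, ht, hrt⟩ := expl_top he
  obtain ⟨t', ht', hrt'⟩ := expl_top he'
  have k1 : Rch (((ω : Set (ℤ × ℤ)) ∩ U) ∪ {v | mir (X0 + m) v ∈ E}) x (mir (X0 + m) t) := by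
    have a1 := hr.mono (S' := ((ω : Set (ℤ × ℤ)) ∩ U) ∪ {v | mir (X0 + m) v ∈ E})
      Set.subset_union_left
    have a2 := hrt.map (S' := ((ω : Set (ℤ × ℤ)) ∩ U) ∪ {v | mir (X0 + m) v ∈ E})
      (mir (X0 + m)) (mir_adj _) (fun v hv => Or.inr (by
        simp only [Set.mem_ofPred_eq, mir_mir]; exact hv))
    rw [mir_mir] at a2
    exact (a1.trans (Rch.edge a1.right a2.left ha)).trans a2
  have k2 : Rch ({v | v ∉ ω ∧ v ∈ U} ∪ E) (mir (X0 + m) x') t' := by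
    have a1 := hr'.map (S' := {v | v ∉ ω ∧ v ∈ U} ∪ E) (mir (X0 + m)) (mir_adj _) (by
      rintro v ⟨hv, hv'⟩
      exact Or.inl ⟨(mem_flip_of_mem hUW hv').1 hv, unex_rfl v hv'⟩)
    have a2 := hrt'.mono (S' := {v | v ∉ ω ∧ v ∈ U} ∪ E) Set.subset_union_right
    exact (a1.trans (Rch.edge a1.right a2.left (mir_adj _ _ _ ha'))).trans a2
  have hxU := hr.left
  have hxU' := hr'.left
  have hne : x ≠ mir (X0 + m) x' := by
    intro hxx
    have := (mem_flip_of_mem hUW hxU'.2).1 hxU'.1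
    rw [← hxx] at this
    exact this hxU.1
  have hne := ne_coord hne
  have hT := hER _ hrt.right
  have hT' := hER _ hrt'.right
  obtain ⟨N, hN⟩ := rect_bdd X0 (2 * m + 1) b0 h
  have hRR : ∀ v ∈ Rect X0 m b0 h, v ∈ Rect X0 (2 * m + 1) b0 h := by
    rintro v ⟨⟨q1, q2⟩, q3, q4⟩
    exact ⟨⟨q1, q2⟩, by omega, by omega⟩
  have b1 : ∀ v ∈ ((ω : Set (ℤ × ℤ)) ∩ U) ∪ {v | mir (X0 + m) v ∈ E},
      b0 ≤ v.2 ∧ v.2 ≤ b0 + h - 1 := by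
    rintro v (hv | hv)
    · have := hUR v hv.2; have := this.1; omega
    · have := hER _ hv; have := this.1; simp only [mir] at this; omega
  have b2 : ∀ v ∈ {v | v ∉ ω ∧ v ∈ U} ∪ E, v ∈ Rect X0 (2 * m + 1) b0 h := by
    rintro v (hv | hv)
    · exact hUR v hv.2
    · exact hRR v (hER _ hv)
  obtain ⟨v, hv, hv'⟩ := strip_meet (N := N + 1) k1 k2 b1
    (fun v hv => by have := (b2 v hv).1; omega)
    (fun v hv => by have := hN v (b2 v hv); omega) hx (by simpa [mir] using hx')
    (by simpa [mir] using ht) ht'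
    (by simp only [mir] at hne ⊢; omega)
    (by have := hT.2; have := hT'.2; simp only [mir]; omega)
  rcases hv with hv | hv <;> rcases hv' with hv' | hv'
  · exact hv'.1 hv.1
  · exact hUE v hv.2 hv'
  · exact hUE' v hv'.2 hv
  · have c1 := (hER _ hv).2
    have c2 := (hER _ hv').2
    simp only [mir] at c1
    omega

/-- `S` joins the part of the bottom row selected by `P` to the top row of the rectangle. -/
def TBfrom (P : ℤ × ℤ → Prop) (X0 m b0 h : ℤ) (S : Set (ℤ × ℤ)) : Prop :=
  ∃ p q, p.2 = b0 ∧ P p ∧ q.2 = b0 + h - 1 ∧ Rch (S ∩ Rect X0 m b0 h) p q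

lemma TBfrom.mono {P : ℤ × ℤ → Prop} (hS : S ⊆ S') (hL : TBfrom P X0 m b0 h S) :
    TBfrom P X0 m b0 h S' := by
  obtain ⟨p, q, hp, hP, hq, hr⟩ := hL
  exact ⟨p, q, hp, hP, hq, hr.mono (Set.inter_subset_inter_left _ hS)⟩

/-- A crossing of the doubled rectangle starting in the left half crosses the left half or
produces the event `Reach`. -/
lemma TBfrom_left (hm : 2 ≤ m)
    (hL : TBfrom (fun p => 2 * p.1 + p.2 ≤ X0 + m) X0 (2 * m + 1) b0 h S) :
    TB X0 m b0 h S ∨ Reach X0 m b0 h S := by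
  rw [TB_iff_hang]
  obtain ⟨x, y, hx, hxk, hy, hr⟩ := hL
  by_contra hcon
  push Not at hcon
  obtain ⟨hG, hV⟩ := hcon
  have hEk : ∀ v ∈ Expl X0 m b0 h S, 2 * v.1 + v.2 < X0 + m := fun v hv => hv.1.2.2
  have key : Rch (S ∩ Unex X0 m b0 h S) x y := by
    refine hr.rec' (P := fun y => Rch (S ∩ Unex X0 m b0 h S) x y) ?_ ?_
    · intro hxm
      refine Rch.refl ⟨hxm.1, hxm.2, fun hE => hG x (expl_hang hE hxm.1) hx, fun hE => ?_⟩
      have := hEk _ hE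
      simp only [mir] at this
      omega
    · intro v w _ ha hw ih
      have hvU := ih.right.2
      by_cases h1 : mir (X0 + m) w ∈ Expl X0 m b0 h S
      · exact absurd ⟨x, v, w, hx, hxk, ih, ha, h1⟩ hV
      by_cases h2 : w ∈ Expl X0 m b0 h S
      · exfalso
        have hwD := expl_hang h2 hw.1
        have hvk : X0 + m ≤ 2 * v.1 + v.2 := by
          by_contra hlt
          refine hvU.2.1 ⟨⟨hvU.1.1, hvU.1.2.1, by omega⟩, Or.inr (Or.inr ⟨w, hwD, ha.symm⟩)⟩
        have hwk := hEk _ h2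
        by_cases hax : 2 * v.1 + v.2 = X0 + m
        · -- `v` is on the axis, hence also adjacent to the mirror image of `w`
          refine hV ⟨x, v, mir (X0 + m) w, hx, hxk, ih, ?_, by rwa [mir_mir]⟩
          have := mir_adj (X0 + m) _ _ ha
          have hv : mir (X0 + m) v = v := by ext <;> simp [mir]; omega
          rwa [hv] at this
        · -- `v` is the mirror image of `w`
          have hv : mir (X0 + m) v = w := by
            rw [adj_iff] at ha
            ext <;> simp [mir] <;> omega
          exact hvU.2.2 (by rwa [hv])
      · exact ih.tail ha ⟨hw.1, hw.2, h2, h1⟩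
  have hyU := key.right.2
  have hyR := hyU.1
  have hyk : X0 + m ≤ 2 * y.1 + y.2 := by
    by_contra hlt
    exact hyU.2.1 ⟨⟨hyR.1, hyR.2.1, by omega⟩, Or.inl hy⟩
  have hyk' : 2 * y.1 + y.2 = X0 + m := by
    by_contra hne
    refine hyU.2.2 ⟨⟨hyR.1, ?_, ?_⟩, Or.inl hy⟩
    · have := hyR.2.2; simp only [mir]; omega
    · simp only [mir]; omega
  refine hV ⟨x, y, (y.1 + 1, y.2), hx, hxk, key, by rw [adj_iff]; simp, ⟨hyR.1, ?_, ?_⟩, Or.inl hy⟩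
  · simp only [mir]; omega
  · simp only [mir]; omega

/-- When the left rectangle is not crossed, flipping the colours of the unexamined region shows that
`Reach` fails at least half of the time; if it fails, no crossing of the doubled rectangle starts in
the left half of its bottom row. -/
lemma mu_noTB_le {W : Finset (ℤ × ℤ)} (hm : 2 ≤ m)
    (hW : Rect X0 (2 * m + 1) b0 h ⊆ (W : Set (ℤ × ℤ))) :
    mu W (fun ω => ¬ TB X0 m b0 h (ω : Set (ℤ × ℤ))) ≤ 2 * mu W (fun ω =>
      ¬ TBfrom (fun p => 2 * p.1 + p.2 ≤ X0 + m) X0 (2 * m + 1) b0 h (ω : Set (ℤ × ℤ))) := by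
  set G : Finset (ℤ × ℤ) → Prop := fun ω => ¬ TB X0 m b0 h (ω : Set (ℤ × ℤ)) with hG
  set V : Finset (ℤ × ℤ) → Prop := fun ω => Reach X0 m b0 h (ω : Set (ℤ × ℤ)) with hV
  set Φ : Finset (ℤ × ℤ) → Finset (ℤ × ℤ) := fun ω =>
    flip W (Unex X0 m b0 h ω) (mir (X0 + m)) ω with hΦ
  have hUW : ∀ ω : Finset (ℤ × ℤ), Unex X0 m b0 h ω ⊆ (W : Set (ℤ × ℤ)) :=
    fun ω v hv => hW hv.1
  have hH : ∀ ω ⊆ W, Hang X0 m b0 h (Φ ω : Set (ℤ × ℤ)) = Hang X0 m b0 h ω := by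
    intro ω hω
    refine hang_congr fun v hv => ?_
    exact (mem_flip_of_notMem hω (fun hvU => hvU.2.1 hv)).symm
  have h1 : mu W (fun ω => G ω ∧ V ω) ≤ mu W (fun ω => G ω ∧ ¬ V ω) := by
    refine mu_le_of_inj Φ ?_ ?_
    · rintro ω hω ⟨hg, hv⟩
      refine ⟨flip_subset _ _ _ _, ?_, not_reach_flip hW (hH ω hω) hv⟩
      simp only [hG, TB_iff_hang] at hg ⊢
      rwa [hH ω hω]
    · intro ω hω ω' hω' _ _ he
      have hD : Hang X0 m b0 h (ω : Set (ℤ × ℤ)) = Hang X0 m b0 h ω' := by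
        rw [← hH ω hω, ← hH ω' hω', he]
      have hU := unex_congr hD
      rw [← flip_flip (hUW ω) (mir_mir (X0 + m)) unex_rfl hω,
        ← flip_flip (hUW ω') (mir_mir (X0 + m)) unex_rfl hω']
      simp only [hΦ] at he
      rw [he, hU]
  have h2 : mu W (fun ω => G ω ∧ ¬ V ω) ≤ mu W (fun ω =>
      ¬ TBfrom (fun p => 2 * p.1 + p.2 ≤ X0 + m) X0 (2 * m + 1) b0 h (ω : Set (ℤ × ℤ))) := by
    refine mu_mono fun ω _ hg hT => ?_
    rcases TBfrom_left hm hT with hT | hT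
    · exact hg.1 hT
    · exact hg.2 hT
  have h3 := mu_or_add_and W (fun ω => G ω ∧ V ω) (fun ω => G ω ∧ ¬ V ω)
  have h4 : mu W G ≤ mu W (fun ω => (G ω ∧ V ω) ∨ (G ω ∧ ¬ V ω)) :=
    mu_mono fun ω _ hg => by by_cases hv : V ω <;> simp [hg, hv]
  have h5 := mu_nonneg W (fun ω => (G ω ∧ V ω) ∧ (G ω ∧ ¬ V ω))
  linarith

/-- Reflection exchanges the two halves of the bottom row. -/
lemma mu_TBfrom_right {W : Finset (ℤ × ℤ)}
    (hW : Rect X0 (2 * m + 1) b0 h ⊆ (W : Set (ℤ × ℤ))) :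
    mu W (fun ω =>
      ¬ TBfrom (fun p => 2 * p.1 + p.2 ≤ X0 + m) X0 (2 * m + 1) b0 h (ω : Set (ℤ × ℤ))) ≤
    mu W (fun ω =>
      ¬ TBfrom (fun p => X0 + m ≤ 2 * p.1 + p.2) X0 (2 * m + 1) b0 h (ω : Set (ℤ × ℤ))) := by
  set R := Rect X0 (2 * m + 1) b0 h with hR
  -- complementing on `R` and flipping afterwards amounts to a reflection
  refine mu_le_of_inj (fun ω => flip W R (mir (X0 + m)) (flip W R id ω)) ?_ ?_
  · intro ω hω hno
    refine ⟨flip_subset _ _ _ _, ?_⟩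
    rintro ⟨p, q, hp, hP, hq, hr⟩
    refine hno ⟨mir (X0 + m) p, mir (X0 + m) q, hp, ?_, hq, hr.map _ (mir_adj _) ?_⟩
    · simp only [mir]; omega
    · rintro v ⟨hv, hvR⟩
      have h1 := (mem_flip_of_mem hW hvR).1 hv
      rw [mem_flip_of_mem hW (rect_rfl hvR), not_not] at h1
      exact ⟨h1, rect_rfl hvR⟩
  · intro ω hω ω' hω' _ _ he
    have h1 := congrArg (flip W R (mir (X0 + m))) he
    rw [flip_flip hW (mir_mir _) (fun v => rect_rfl) (flip_subset _ _ _ _),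
      flip_flip hW (mir_mir _) (fun v => rect_rfl) (flip_subset _ _ _ _)] at h1
    rw [← flip_flip (ρ := id) hW (fun _ => rfl) (fun _ h => h) hω, h1,
      flip_flip (ρ := id) hW (fun _ => rfl) (fun _ h => h) hω']

/-- If rectangles of width `m` are crossed with probability at most `1 - c`, those of width
`2 * m + 1` are crossed with probability at most `1 - (c / 2) ^ 2`. -/
lemma mu_TB_double (hm : 2 ≤ m) {c : ℝ} (hc : 0 ≤ c)
    (hA : ∀ X0 b0 W, mu W (fun ω => TB X0 m b0 h (ω : Set (ℤ × ℤ))) ≤ 1 - c)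
    (X0 b0 : ℤ) (W : Finset (ℤ × ℤ)) :
    mu W (fun ω => TB X0 (2 * m + 1) b0 h (ω : Set (ℤ × ℤ))) ≤ 1 - (c / 2) ^ 2 := by
  obtain ⟨N, hN⟩ := rect_bdd X0 (2 * m + 1) b0 h
  obtain ⟨W', h1, h2⟩ := exists_finset_of_bdd _ N hN W
  refine (mu_mono_set h1 (inc_of_mono fun _ _ => TB.mono)).trans ?_
  have k1 := mu_noTB_le hm h2
  have k2 := mu_TBfrom_right h2
  have k3 := harris W' (inc_of_mono fun _ _ => TBfrom.mono
      (P := fun p => 2 * p.1 + p.2 ≤ X0 + m) (X0 := X0) (m := 2 * m + 1) (b0 := b0) (h := h))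
    (inc_of_mono fun _ _ => TBfrom.mono
      (P := fun p => X0 + m ≤ 2 * p.1 + p.2) (X0 := X0) (m := 2 * m + 1) (b0 := b0) (h := h))
  have k4 := hA X0 b0 W'
  have k5 : mu W' (fun ω =>
      ¬ TBfrom (fun p => 2 * p.1 + p.2 ≤ X0 + m) X0 (2 * m + 1) b0 h (ω : Set (ℤ × ℤ)) ∧
      ¬ TBfrom (fun p => X0 + m ≤ 2 * p.1 + p.2) X0 (2 * m + 1) b0 h (ω : Set (ℤ × ℤ))) ≤
      mu W' (fun ω => ¬ TB X0 (2 * m + 1) b0 h (ω : Set (ℤ × ℤ))) := by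
    refine mu_mono ?_
    rintro ω - ⟨g1, g2⟩ ⟨p, q, hp, hq, hr⟩
    rcases le_total (2 * p.1 + p.2) (X0 + m) with hle | hle
    · exact g1 ⟨p, q, hp, hle, hq, hr⟩
    · exact g2 ⟨p, q, hp, hle, hq, hr⟩
  rw [mu_not] at k1 k5
  have k6 : c / 2 ≤ mu W' (fun ω =>
      ¬ TBfrom (fun p => 2 * p.1 + p.2 ≤ X0 + m) X0 (2 * m + 1) b0 h (ω : Set (ℤ × ℤ))) := by
    linarith
  have k7 := mul_le_mul k6 (k6.trans k2) (by linarith) (mu_nonneg _ _)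
  nlinarith

/-- A box-crossing estimate: rectangles with `h` rows and about `8 * h` sites per row fail to be
crossed from bottom to top with probability bounded below. -/
lemma mu_TB_wide {h : ℤ} (hh : 3 ≤ h) (X0 b0 : ℤ) (W : Finset (ℤ × ℤ)) :
    mu W (fun ω => TB X0 (16 * h - 1) b0 h (ω : Set (ℤ × ℤ))) ≤ 1 - 1 / 2 ^ 46 := by
  have s0 := fun X0 b0 W => (mu_TB_le X0 b0 h W).trans
    (show (1 / 2 : ℝ) ≤ 1 - 1 / 2 by norm_num)
  have s1 := mu_TB_double (by omega) (by norm_num) s0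
  have s2 := mu_TB_double (by omega) (by norm_num) s1
  have s3 := mu_TB_double (by omega) (by norm_num) s2
  have s4 := mu_TB_double (by omega) (by norm_num) s3 X0 b0 W
  rw [show 2 * (2 * (2 * (2 * (h - 1) + 1) + 1) + 1) + 1 = 16 * h - 1 by ring] at s4
  exact s4.trans (by norm_num)

end Doubling

/-! ### A path leaving a box crosses one of boundedly many quadrilaterals -/

/-- The crossing events at scale `h`: `(0, u, v)` and `(1, u, v)` are the left-right crossings of
rhombi of sizes `h` and `3 * h`, and `(2, u, v)` is the bottom-top crossing of a rectangle; all
corners are multiples of `h`. -/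
def Quad (h : ℤ) (ix : Fin 3 × ℤ × ℤ) (S : Set (ℤ × ℤ)) : Prop :=
  if ix.1 = 0 then LR (ix.2.1 * h) (ix.2.2 * h) h S
  else if ix.1 = 1 then LR (ix.2.1 * h) (ix.2.2 * h) (3 * h) S
  else TB (ix.2.1 * h) (16 * h - 1) (ix.2.2 * h) h S

lemma Quad.mono {h : ℤ} {ix : Fin 3 × ℤ × ℤ} {S S' : Set (ℤ × ℤ)} (hS : S ⊆ S')
    (hQ : Quad h ix S) : Quad h ix S' := by
  unfold Quad at hQ ⊢
  split_ifs at hQ ⊢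
  · exact hQ.mono hS
  · exact hQ.mono hS
  · exact hQ.mono hS

lemma mu_Quad_le {h : ℤ} (hh : 3 ≤ h) (ix : Fin 3 × ℤ × ℤ) (W : Finset (ℤ × ℤ)) :
    mu W (fun ω => Quad h ix (ω : Set (ℤ × ℤ))) ≤ 1 - 1 / 2 ^ 46 := by
  have half : (1 / 2 : ℝ) ≤ 1 - 1 / 2 ^ 46 := by norm_num
  unfold Quad
  split_ifs
  · exact (mu_LR_le _ _ _ _).trans half
  · exact (mu_LR_le _ _ _ _).trans half
  · exact mu_TB_wide hh _ _ _

/-- The indices of the quadrilaterals that matter for a box of `L` cells of size `h` per side. -/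
def Ix (L : ℤ) : Finset (Fin 3 × ℤ × ℤ) :=
  Finset.univ ×ˢ (Finset.Icc (-6) (3 * L) ×ˢ Finset.Icc (-6) (3 * L))

lemma mem_Ix {L : ℤ} {t : Fin 3} {u v : ℤ} :
    (t, u, v) ∈ Ix L ↔ (-6 ≤ u ∧ u ≤ 3 * L) ∧ -6 ≤ v ∧ v ≤ 3 * L := by
  simp [Ix]

lemma div_bounds {h : ℤ} (hh : 0 < h) (x : ℤ) : x / h * h ≤ x ∧ x < x / h * h + h := by
  have h1 := Int.ediv_mul_le x hh.ne'
  have h2 := Int.lt_ediv_add_one_mul_self x hh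
  rw [add_mul, one_mul] at h2
  exact ⟨h1, h2⟩

lemma div_range {h L x : ℤ} (hh : 0 < h) (hx : 0 ≤ x) (hL : x < L * h) :
    0 ≤ x / h ∧ x / h < L :=
  ⟨Int.ediv_nonneg hx hh.le, Int.ediv_lt_of_lt_mul hh hL⟩

/-- A bottom-top crossing of a long strip either spans a rhombus or stays in a rectangle. -/
lemma strip_quad {n : ℕ} {h L b : ℤ} {C : Set (ℤ × ℤ)} (hh : 0 < h) (hC : C ⊆ lam n)
    (hn : (n : ℤ) ≤ L * h) (hb : -6 ≤ b ∧ b ≤ 3 * L) {u w : ℤ × ℤ} (hu : u.2 = b * h)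
    (hw : w.2 = b * h + h - 1)
    (hr : Rch {v | v ∈ C ∧ b * h ≤ v.2 ∧ v.2 ≤ b * h + h - 1} u w) :
    ∃ ix ∈ Ix L, Quad h ix C := by
  obtain ⟨c1, c2, c3, c4⟩ := hC hr.left.1
  have hu1 := div_range (L := L) hh c1 (by omega)
  have hd := div_bounds hh u.1
  set S := {v | v ∈ C ∧ b * h ≤ v.2 ∧ v.2 ≤ b * h + h - 1} with hS
  by_cases hR : ∃ v, Rch S u v ∧ u.1 + 2 * h ≤ v.1
  · obtain ⟨v, hv, hv1⟩ := hR
    have e1 : (u.1 / h + 1) * h = u.1 / h * h + h := by ring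
    obtain ⟨p, q, hp, hq, hpq⟩ := hv.extract (fun v => v.1) fst_step
      (lo := (u.1 / h + 1) * h) (hi := (u.1 / h + 1) * h + h - 1) (by omega)
      (by omega) (by omega)
    refine ⟨(0, u.1 / h + 1, b), mem_Ix.2 ⟨by omega, hb⟩, ?_⟩
    simp only [Quad, if_true]
    refine ⟨p, q, hp, hq, hpq.mono ?_⟩
    rintro v ⟨⟨h1, h2⟩, h3⟩
    exact ⟨h1, ⟨by omega, by omega⟩, by omega, by omega⟩
  by_cases hR' : ∃ v, Rch S u v ∧ v.1 ≤ u.1 - 2 * h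
  · obtain ⟨v, hv, hv1⟩ := hR'
    have e1 : (u.1 / h - 1) * h = u.1 / h * h - h := by ring
    obtain ⟨p, q, hp, hq, hpq⟩ := hv.symm.extract (fun v => v.1) fst_step
      (lo := (u.1 / h - 1) * h) (hi := (u.1 / h - 1) * h + h - 1) (by omega)
      (by omega) (by omega)
    refine ⟨(0, u.1 / h - 1, b), mem_Ix.2 ⟨by omega, hb⟩, ?_⟩
    simp only [Quad, if_true]
    refine ⟨p, q, hp, hq, hpq.mono ?_⟩
    rintro v ⟨⟨h1, h2⟩, h3⟩
    exact ⟨h1, ⟨by omega, by omega⟩, by omega, by omega⟩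
  push Not at hR hR'
  have hX := div_bounds hh (2 * u.1 + u.2)
  have hX' := div_range (L := 3 * L) hh (x := 2 * u.1 + u.2) (by omega)
    (by rw [mul_assoc]; omega)
  have e1 : ((2 * u.1 + u.2) / h - 6) * h = (2 * u.1 + u.2) / h * h - 6 * h := by ring
  refine ⟨(2, (2 * u.1 + u.2) / h - 6, b), mem_Ix.2 ⟨by omega, hb⟩, ?_⟩
  simp only [Quad]
  rw [if_neg (by decide), if_neg (by decide)]
  refine ⟨u, w, hu, hw, hr.comp.mono ?_⟩
  intro v hv
  have h1 := hR v hv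
  have h2 := hR' v hv
  obtain ⟨h3, h4, h5⟩ := hv.right
  exact ⟨h3, ⟨by omega, by omega⟩, by omega, by omega⟩

lemma exit_quad {n : ℕ} {h L : ℤ} {C : Set (ℤ × ℤ)} (hh : 0 < h) (hC : C ⊆ lam n)
    (hn : (n : ℤ) ≤ L * h) {z y : ℤ × ℤ} (hr : Rch C z y)
    (hy : ¬ ((z.1 / h * h - 3 * h ≤ y.1 ∧ y.1 < z.1 / h * h + 4 * h) ∧
      z.2 / h * h - 3 * h ≤ y.2 ∧ y.2 < z.2 / h * h + 4 * h)) :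
    ∃ ix ∈ Ix L, Quad h ix C := by
  obtain ⟨c1, c2, c3, c4⟩ := hC hr.left
  have hi := div_range (L := L) hh c1 (by omega)
  have hj := div_range (L := L) hh c3 (by omega)
  have bi := div_bounds hh z.1
  have bj := div_bounds hh z.2
  set i := z.1 / h
  set j := z.2 / h
  have e1 : (j + 1) * h = j * h + h := by ring
  have e2 : (j - 1) * h = j * h - h := by ring
  have e3 : (i + 1) * h = i * h + h := by ring
  have e4 : (i - 3) * h = i * h - 3 * h := by ring
  by_cases hU : ∃ w, Rch C z w ∧ j * h + 2 * h ≤ w.2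
  · obtain ⟨w, hw, hw2⟩ := hU
    obtain ⟨p, q, hp, hq, hpq⟩ := hw.extract (fun v => v.2) snd_step
      (lo := (j + 1) * h) (hi := (j + 1) * h + h - 1) (by omega)
      (by omega) (by omega)
    exact strip_quad hh hC hn (by omega) hp hq hpq
  by_cases hD : ∃ w, Rch C z w ∧ w.2 < j * h - h
  · obtain ⟨w, hw, hw2⟩ := hD
    obtain ⟨p, q, hp, hq, hpq⟩ := hw.symm.extract (fun v => v.2) snd_step
      (lo := (j - 1) * h) (hi := (j - 1) * h + h - 1) (by omega)
      (by omega) (by omega)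
    exact strip_quad hh hC hn (by omega) hp hq hpq
  push Not at hU hD
  have y1 := hU y hr
  have y2 := hD y hr
  have hor : i * h + 4 * h ≤ y.1 ∨ y.1 < i * h - 3 * h := by omega
  rcases hor with hor | hor
  · obtain ⟨p, q, hp, hq, hpq⟩ := hr.comp.extract (fun v => v.1) fst_step
      (lo := (i + 1) * h) (hi := (i + 1) * h + 3 * h - 1) (by omega)
      (by omega) (by omega)
    refine ⟨(1, i + 1, j - 1), mem_Ix.2 ⟨by omega, by omega⟩, ?_⟩
    simp only [Quad]
    rw [if_neg (by decide), if_pos trivial]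
    refine ⟨p, q, hp, hq, hpq.mono ?_⟩
    rintro v ⟨h1, h2⟩
    have := hU v h1
    have := hD v h1
    exact ⟨h1.right, ⟨by omega, by omega⟩, by omega, by omega⟩
  · obtain ⟨p, q, hp, hq, hpq⟩ := hr.comp.symm.extract (fun v => v.1) fst_step
      (lo := (i - 3) * h) (hi := (i - 3) * h + 3 * h - 1) (by omega)
      (by omega) (by omega)
    refine ⟨(1, i - 3, j - 1), mem_Ix.2 ⟨by omega, by omega⟩, ?_⟩
    simp only [Quad]
    rw [if_neg (by decide), if_pos trivial]
    refine ⟨p, q, hp, hq, hpq.mono ?_⟩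
    rintro v ⟨h1, h2⟩
    have := hU v h1
    have := hD v h1
    exact ⟨h1.right, ⟨by omega, by omega⟩, by omega, by omega⟩

/-! ### Deterministic covering of a cluster by local clusters -/

/-- The cell of side `h` containing the site `z`. -/
def cell (h : ℤ) (z : ℤ × ℤ) : ℤ × ℤ := (z.1 / h, z.2 / h)

/-- The cell `c` together with the four layers of cells around it. -/
def Bx (h : ℤ) (c : ℤ × ℤ) : Set (ℤ × ℤ) :=
  {v | (c.1 * h - 4 * h ≤ v.1 ∧ v.1 < c.1 * h + 5 * h) ∧
    c.2 * h - 4 * h ≤ v.2 ∧ v.2 < c.2 * h + 5 * h}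

/-- The local cluster of `z`: the sites reachable from `z` inside `V` without leaving the box
around the cell of `z`. -/
def Loc (V : Set (ℤ × ℤ)) (h : ℤ) (z : ℤ × ℤ) : Set (ℤ × ℤ) :=
  {v | Rch (V ∩ Bx h (cell h z)) z v}

lemma mem_Bx_cell {h : ℤ} (hh : 0 < h) (z : ℤ × ℤ) : z ∈ Bx h (cell h z) := by
  have h1 := div_bounds hh z.1
  have h2 := div_bounds hh z.2
  exact ⟨⟨by simp only [cell]; omega, by simp only [cell]; omega⟩,
    by simp only [cell]; omega, by simp only [cell]; omega⟩

lemma Loc.eq_of_mem {V : Set (ℤ × ℤ)} {h : ℤ} {z z' v : ℤ × ℤ} (hc : cell h z = cell h z')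
    (hv : v ∈ Loc V h z) (hv' : v ∈ Loc V h z') : Loc V h z = Loc V h z' := by
  unfold Loc at *
  rw [Set.mem_ofPred_eq] at hv hv'
  rw [hc] at hv ⊢
  ext w
  exact ⟨fun hw => hv'.trans (hv.symm.trans hw), fun hw => hv.trans (hv'.symm.trans hw)⟩

/-- If the cluster of `z` is larger than its local cluster, then the local cluster contains a
crossing of one of the quadrilaterals. -/
lemma Loc.quad {n : ℕ} {h L : ℤ} {V : Set (ℤ × ℤ)} (hh : 0 < h) (hV : V ⊆ lam n)
    (hn : (n : ℤ) ≤ L * h) {z y : ℤ × ℤ} (hr : Rch V z y) (hy : y ∉ Loc V h z) :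
    ∃ ix ∈ Ix L, Quad h ix (Loc V h z) := by
  by_contra hno
  refine hy (hr.rec' (P := fun y => y ∈ Loc V h z)
    (fun hz => Rch.refl ⟨hz, mem_Bx_cell hh z⟩) ?_)
  intro v w _ ha hw hv
  refine Rch.tail hv ha ⟨hw, ?_⟩
  have hC : Loc V h z ⊆ lam n := fun u hu => hV hu.right.1
  have near := by_contra fun hfar => hno (exit_quad hh hC hn (Rch.comp hv) hfar)
  rw [adj_iff] at ha
  simp only [Bx, cell, Set.mem_ofPred_eq]
  omega

lemma exists_cover {n k : ℕ} {h L : ℤ} {V : Set (ℤ × ℤ)} {F : Finset (ℤ × ℤ)} (hh : 0 < h)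
    (hV : V ⊆ lam n) (hn : (n : ℤ) ≤ L * h) (hF : V ⊆ F)
    (hk : ∀ ix ∈ Ix L, ¬ DisjOcc (fun ω => Quad h ix (ω : Set (ℤ × ℤ))) k F) (x : ℤ × ℤ) :
    ∃ T : Finset (ℤ × ℤ),
      T.card ≤ ((Finset.Icc 0 L ×ˢ Finset.Icc 0 L) ×ˢ Ix L).card * k + 1 ∧
      (∀ z ∈ T, Rch V x z) ∧ ∀ y, Rch V x y → ∃ z ∈ T, y ∈ Loc V h z := by
  by_cases hall : ∃ z, Rch V x z ∧ ∀ y, Rch V x y → y ∈ Loc V h z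
  · obtain ⟨z, hz, hzy⟩ := hall
    exact ⟨{z}, by simp, by simpa using hz, fun y hy => ⟨z, by simp, hzy y hy⟩⟩
  push Not at hall
  set X := F.filter (fun z => Rch V x z) with hX
  have memX : ∀ z, z ∈ X ↔ Rch V x z := fun z =>
    ⟨fun hz => (Finset.mem_filter.1 hz).2, fun hz => Finset.mem_filter.2 ⟨hF hz.right, hz⟩⟩
  have hquad : ∀ z, Rch V x z → ∃ ix ∈ Ix L, Quad h ix (Loc V h z) := by
    intro z hz
    obtain ⟨y, hy, hy'⟩ := hall z hz
    exact Loc.quad hh hV hn (hz.symm.trans hy) hy'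
  choose! ix hix hixq using hquad
  -- one representative for each pair (cell, local cluster)
  obtain ⟨U, hUX, hUinj, hUim⟩ :=
    (Set.surjOn_image (fun z => (cell h z, Loc V h z)) (X : Set (ℤ × ℤ))).exists_subset_injOn_image_eq
  obtain ⟨T, rfl⟩ := (X.finite_toSet.subset hUX).exists_finset_coe
  have hTX : ∀ z ∈ T, Rch V x z := fun z hz => (memX z).1 (hUX hz)
  have hself : ∀ z, Rch V x z → z ∈ Loc V h z := fun z hz =>
    Rch.refl ⟨hz.right, mem_Bx_cell hh z⟩
  refine ⟨T, ?_, hTX, ?_⟩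
  · by_contra hcard
    push Not at hcard
    obtain ⟨⟨c, q⟩, hcq, hlt⟩ := Finset.exists_lt_card_fiber_of_mul_lt_card_of_maps_to
      (s := T) (t := (Finset.Icc 0 L ×ˢ Finset.Icc 0 L) ×ˢ Ix L)
      (f := fun z => (cell h z, ix z)) (n := k)
      (by
        intro z hz
        have hzl := hTX z hz
        obtain ⟨c1, c2, c3, c4⟩ := hV hzl.right
        have h1 := div_range (L := L) hh c1 (by omega)
        have h2 := div_range (L := L) hh c3 (by omega)
        simp only [Finset.mem_product, Finset.mem_Icc, cell]
        exact ⟨⟨⟨h1.1, h1.2.le⟩, h2.1, h2.2.le⟩, hix z hzl⟩)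
      (by omega)
    obtain ⟨J, hJ, hJk⟩ := Finset.exists_subset_card_eq hlt.le
    have hJT : ∀ z ∈ J, z ∈ T ∧ cell h z = c ∧ ix z = q := by
      intro z hz
      have := hJ hz
      simpa using this
    have hq : q ∈ Ix L := (Finset.mem_product.1 hcq).2
    refine hk q hq ?_
    have hcoe : ∀ z, ((F.filter (fun v => v ∈ Loc V h z) : Finset (ℤ × ℤ)) : Set (ℤ × ℤ))
        = Loc V h z := by
      intro z
      ext v
      simp only [Finset.coe_filter, Set.mem_ofPred_eq]
      exact ⟨fun hv => hv.2, fun hv => ⟨hF hv.right.1, hv⟩⟩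
    have hfam := disjOcc_of_family (A := fun ω => Quad h q (ω : Set (ℤ × ℤ))) J
      (fun z => F.filter (fun v => v ∈ Loc V h z))
      (by
        intro z hz
        obtain ⟨h1, -, h3⟩ := hJT z hz
        have := hixq z (hTX z h1)
        rw [h3] at this
        rw [hcoe]
        exact this)
      (by
        intro z hz z' hz' hne
        obtain ⟨h1, h2, -⟩ := hJT z hz
        obtain ⟨h1', h2', -⟩ := hJT z' hz'
        rw [Finset.disjoint_left]
        intro v hv hv'
        have hc : cell h z = cell h z' := by rw [h2, h2']
        refine hne (hUinj h1 h1' ?_)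
        exact Prod.ext hc (Loc.eq_of_mem hc (Finset.mem_filter.1 hv).2 (Finset.mem_filter.1 hv').2))
    rw [hJk] at hfam
    refine DisjOcc.inc _ _ _ _ ?_ hfam
    exact Finset.biUnion_subset.2 fun z _ => Finset.filter_subset _ _
  · intro y hy
    have : (cell h y, Loc V h y) ∈ (fun z => (cell h z, Loc V h z)) '' (T : Set (ℤ × ℤ)) := by
      rw [hUim]
      exact ⟨y, (memX y).2 hy, rfl⟩
    obtain ⟨z, hz, hzy⟩ := this
    refine ⟨z, hz, ?_⟩
    have h2 : Loc V h z = Loc V h y := (Prod.ext_iff.1 hzy).2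
    rw [h2]
    exact hself y hy

/-! ### Euclidean size of a local cluster -/

lemma dist_sitePt_le (n : ℕ) (u v : ℤ × ℤ) :
    dist (sitePt n u) (sitePt n v) ≤
      2 * (|(u.1 : ℝ) - v.1| / n) + 2 * (|(u.2 : ℝ) - v.2| / n) := by
  have h3 : Real.sqrt 3 / 2 ≤ 1 := by
    have : Real.sqrt 3 ≤ 2 := by
      rw [Real.sqrt_le_left (by norm_num)]; norm_num
    linarith
  have e1 : |(u.1 : ℝ) / n - v.1 / n| = |(u.1 : ℝ) - v.1| / n := by
    rw [← sub_div, abs_div, Nat.abs_cast]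
  have e2 : |(u.2 : ℝ) / n - v.2 / n| = |(u.2 : ℝ) - v.2| / n := by
    rw [← sub_div, abs_div, Nat.abs_cast]
  rw [← e1, ← e2, dist_eq_norm]
  refine (Complex.norm_le_abs_re_add_abs_im _).trans ?_
  simp only [sitePt, eucl, triPt, Complex.sub_re, Complex.sub_im]
  set a := (u.1 : ℝ) / n
  set b := (u.2 : ℝ) / n
  set c := (v.1 : ℝ) / n
  set d := (v.2 : ℝ) / n
  have r1 : |a + b / 2 - (c + d / 2)| ≤ |a - c| + |b - d| / 2 := by
    have : a + b / 2 - (c + d / 2) = (a - c) + (b - d) / 2 := by ring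
    rw [this]
    refine (abs_add_le _ _).trans ?_
    rw [abs_div, abs_two]
  have r2 : |Real.sqrt 3 / 2 * b - Real.sqrt 3 / 2 * d| ≤ |b - d| := by
    rw [← mul_sub, abs_mul, abs_of_nonneg (by positivity)]
    exact mul_le_of_le_one_left (abs_nonneg _) h3
  have := abs_nonneg (a - c)
  have := abs_nonneg (b - d)
  linarith

lemma dPathIn_le_of_Loc {n : ℕ} (h0 : 0 < n) {h M : ℤ} (hM : 0 < M) (hMn : h * M ≤ n)
    {V : Set (ℤ × ℤ)} {z y : ℤ × ℤ} (hy : y ∈ Loc V h z) :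
    dPathIn n V z y ≤ ENNReal.ofReal (36 / M) := by
  obtain ⟨γ, hγ⟩ := conn_iff_rch.2 hy
  have hγV : PathIn V z y γ := ⟨hγ.1, fun v hv => (hγ.2.1 v hv).1, hγ.2.2⟩
  refine (iInf₂_le γ hγV).trans (Metric.ediam_le ?_)
  rintro _ ⟨u, hu, rfl⟩ _ ⟨v, hv, rfl⟩
  rw [edist_dist]
  refine ENNReal.ofReal_le_ofReal ((dist_sitePt_le n u v).trans ?_)
  obtain ⟨⟨a1, a2⟩, a3, a4⟩ := (hγ.2.1 u hu).2
  obtain ⟨⟨b1, b2⟩, b3, b4⟩ := (hγ.2.1 v hv).2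
  have hn : (0 : ℝ) < n := by exact_mod_cast h0
  have hMr : (0 : ℝ) < M := by exact_mod_cast hM
  have hMn' : (h : ℝ) * M ≤ n := by exact_mod_cast hMn
  have key : ∀ s t : ℤ, |s - t| ≤ 9 * h → |(s : ℝ) - t| / n ≤ 9 / M := by
    intro s t hst
    have : |(s : ℝ) - t| ≤ 9 * h := by exact_mod_cast hst
    rw [div_le_div_iff₀ hn hMr]
    nlinarith
  have k1 := key u.1 v.1 (by rw [abs_le]; constructor <;> omega)
  have k2 := key u.2 v.2 (by rw [abs_le]; constructor <;> omega)
  calc _ ≤ 2 * (9 / (M : ℝ)) + 2 * (9 / M) := by linarith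
    _ = 36 / M := by ring

/-! ### Percolation probabilities -/

/-- The sites of `Λ_n` as a finite set. -/
def lamF (n : ℕ) : Finset (ℤ × ℤ) := Finset.Ico 0 (n : ℤ) ×ˢ Finset.Ico 0 (n : ℤ)

lemma mem_lamF {n : ℕ} {v : ℤ × ℤ} : v ∈ lamF n ↔ v ∈ lam n := by
  simp only [lamF, Finset.mem_product, Finset.mem_Ico, lam, Set.mem_ofPred_eq, and_assoc]

lemma card_lamF (n : ℕ) : (lamF n).card = n * n := by
  simp [lamF]

/-- The sites of `Λ_n` of colour `b`. -/
def ofCol (n : ℕ) (b : Bool) (ω : ℤ × ℤ → Bool) : Finset (ℤ × ℤ) :=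
  (lamF n).filter (fun v => ω v = b)

lemma pr_eq (n : ℕ) (E : (ℤ × ℤ → Bool) → Prop) :
    pr n E = ((Finset.univ.filter fun c : Config n => E (cfg n c)).card : ℝ) / 2 ^ (n * n) := by
  unfold pr
  rw [Nat.card_eq_fintype_card, Fintype.card_subtype]

lemma pr_mono {n : ℕ} {E E' : (ℤ × ℤ → Bool) → Prop} (h : ∀ ω, E ω → E' ω) :
    pr n E ≤ pr n E' := by
  rw [pr_eq, pr_eq]
  refine div_le_div_of_nonneg_right (Nat.cast_le.2 (Finset.card_le_card ?_)) (by positivity)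
  exact Finset.monotone_filter_right _ fun c _ hc => h _ hc

lemma pr_not (n : ℕ) (E : (ℤ × ℤ → Bool) → Prop) : pr n (fun ω => ¬ E ω) = 1 - pr n E := by
  have hcard : (Finset.univ : Finset (Config n)).card = 2 ^ (n * n) := by
    simp [Finset.card_univ]
  have h := Finset.card_filter_add_card_filter_not (s := (Finset.univ : Finset (Config n)))
    (fun c => E (cfg n c))
  rw [hcard] at h
  have h' : ((Finset.univ.filter fun c : Config n => E (cfg n c)).card : ℝ) +
      ((Finset.univ.filter fun c : Config n => ¬ E (cfg n c)).card : ℝ) = 2 ^ (n * n) := by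
    exact_mod_cast h
  rw [pr_eq, pr_eq, eq_sub_iff_add_eq, ← add_div, add_comm, div_eq_one_iff_eq (by positivity)]
  convert h'

lemma pr_exists_le {ι : Type*} (n : ℕ) (s : Finset ι) (E : ι → (ℤ × ℤ → Bool) → Prop) :
    pr n (fun ω => ∃ i ∈ s, E i ω) ≤ ∑ i ∈ s, pr n (E i) := by
  simp only [pr_eq]
  rw [← Finset.sum_div]
  refine div_le_div_of_nonneg_right ?_ (by positivity)
  rw [← Nat.cast_sum, Nat.cast_le]
  refine le_trans (Finset.card_le_card ?_) Finset.card_biUnion_le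
  intro c hc
  simpa using hc

/-- The sites of a given colour form a uniformly random subset of `Λ_n`. -/
lemma pr_ofCol_le (n : ℕ) (b : Bool) (A : Finset (ℤ × ℤ) → Prop) :
    pr n (fun ω => A (ofCol n b ω)) ≤ mu (lamF n) A := by
  rw [pr_eq]
  unfold mu
  rw [card_lamF]
  refine div_le_div_of_nonneg_right (Nat.cast_le.2 ?_) (by positivity)
  refine Finset.card_le_card_of_injOn (fun c => ofCol n b (cfg n c)) ?_ ?_
  · intro c hc
    simp only [Finset.coe_filter, Finset.mem_univ, true_and, Set.mem_ofPred_eq] at hc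
    simp only [Finset.coe_filter, Finset.mem_powerset, Set.mem_ofPred_eq]
    exact ⟨Finset.filter_subset _ _, hc⟩
  · intro c _ c' _ hcc
    funext ⟨i, j⟩
    have hmem : ((i : ℤ), (j : ℤ)) ∈ lam n := by
      refine ⟨?_, ?_, ?_, ?_⟩ <;> simp
    have hval : ∀ c : Config n, cfg n c ((i : ℤ), (j : ℤ)) = c (i, j) := by
      intro c
      unfold cfg
      split_ifs with hm
      · simp
      · exact absurd hmem hm
    have h1 : ((i : ℤ), (j : ℤ)) ∈ ofCol n b (cfg n c) ↔
        ((i : ℤ), (j : ℤ)) ∈ ofCol n b (cfg n c') := by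
      have := hcc
      simp only at this
      rw [this]
    simp only [ofCol, Finset.mem_filter, mem_lamF, hmem, true_and, hval] at h1
    cases hc : c (i, j) <;> cases hc' : c' (i, j) <;> cases b <;> simp_all

/-! ### The domains -/

lemma lamQ_subset (n : ℕ) {Q : Set (ℝ × ℝ)} (hQ : IsDyadicDomain Q) : lamQ n Q ⊆ lam n := by
  obtain ⟨ℓ, S, hS, rfl, -⟩ := hQ
  intro v hv
  have hv : triPt n v ∈ interior (⋃ ij ∈ S, dyBox ℓ ij) := hv
  have hp : (0 : ℝ) < 2 ^ ℓ := by positivity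
  have hpos : 0 < (triPt n v).1 := by
    have hsub : (⋃ ij ∈ S, dyBox ℓ ij) ⊆ Prod.fst ⁻¹' Set.Ici (0 : ℝ) := by
      intro p hp
      simp only [Set.mem_iUnion] at hp
      obtain ⟨ij, -, h1, -⟩ := hp
      exact le_trans (by positivity) h1
    have := interior_mono hsub hv
    rw [← isOpenMap_fst.preimage_interior_eq_interior_preimage continuous_fst,
      interior_Ici] at this
    exact this
  have hn : (0 : ℝ) < n := by
    rcases Nat.eq_zero_or_pos n with rfl | h
    · simp [triPt] at hpos
    · exact_mod_cast h
  have hv' := interior_subset hv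
  simp only [Set.mem_iUnion] at hv'
  obtain ⟨ij, hij, h1, h2, h3, h4⟩ := hv'
  obtain ⟨hi, hj⟩ := hS ij hij
  have aux : ∀ (i : ℕ) (t : ℤ), i < 2 ^ ℓ → (i : ℝ) / 2 ^ ℓ ≤ (t : ℝ) / n →
      (t : ℝ) / n < ((i : ℝ) + 1) / 2 ^ ℓ → 0 ≤ t ∧ t < n := by
    intro i t hi ha hb
    have h0 : (0 : ℝ) ≤ (t : ℝ) / n := le_trans (by positivity) ha
    have h1 : (t : ℝ) / n < 1 := by
      refine hb.trans_le ((div_le_one hp).2 ?_)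
      exact_mod_cast hi
    rw [div_lt_one hn] at h1
    have h0' : (0 : ℝ) ≤ t := by
      have := mul_nonneg h0 hn.le
      rwa [div_mul_cancel₀ _ hn.ne'] at this
    exact ⟨by exact_mod_cast h0', by exact_mod_cast h1⟩
  obtain ⟨a1, a2⟩ := aux _ _ hi h1 h2
  obtain ⟨a3, a4⟩ := aux _ _ hj h3 h4
  exact ⟨a1, a2, a3, a4⟩

/-! ### The bad events and the union bound -/

/-- At mesh `1 / n`, some quadrilateral with side about `n / M` has `k` disjoint monochromatic
crossings of the same colour. -/
def Bad (M k n : ℕ) (ω : ℤ × ℤ → Bool) : Prop :=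
  ∃ p ∈ (Finset.univ : Finset Bool) ×ˢ Ix (2 * M),
    DisjOcc (fun S => Quad ((n / M : ℕ) : ℤ) p.2 (S : Set (ℤ × ℤ))) k (ofCol n p.1 ω)

lemma exists_pr_Bad_le (M : ℕ) {η : ℝ} (hη : 0 < η) :
    ∃ k : ℕ, ∀ n, 3 * M ≤ n → 0 < M → pr n (Bad M k n) ≤ η := by
  set N : ℕ := ((Finset.univ : Finset Bool) ×ˢ Ix (2 * M)).card with hN
  obtain ⟨k, hk⟩ := exists_pow_lt_of_lt_one (x := η / (N + 1)) (y := 1 - 1 / 2 ^ 46)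
    (by positivity) (by norm_num)
  refine ⟨k, fun n hn hM => ?_⟩
  have h3 : (3 : ℤ) ≤ ((n / M : ℕ) : ℤ) := by
    exact_mod_cast (Nat.le_div_iff_mul_le hM).2 hn
  calc pr n (Bad M k n)
      ≤ ∑ p ∈ (Finset.univ : Finset Bool) ×ˢ Ix (2 * M), pr n (fun ω =>
          DisjOcc (fun S => Quad ((n / M : ℕ) : ℤ) p.2 (S : Set (ℤ × ℤ))) k (ofCol n p.1 ω)) :=
        pr_exists_le n _ _
    _ ≤ ∑ p ∈ (Finset.univ : Finset Bool) ×ˢ Ix (2 * M), η / (N + 1) := by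
        refine Finset.sum_le_sum fun p _ => ?_
        refine (pr_ofCol_le n p.1 _).trans ?_
        refine (mu_disjOcc_le (inc_of_mono fun S S' h => Quad.mono h) k).trans ?_
        exact (pow_le_pow_left₀ (mu_nonneg _ _) (mu_Quad_le h3 _ _) k).trans hk.le
    _ = N * (η / (N + 1)) := by rw [Finset.sum_const, nsmul_eq_mul]
    _ ≤ η := by
        rw [mul_div_assoc', div_le_iff₀ (by positivity)]
        nlinarith

lemma dPathIn_self {n : ℕ} {V : Set (ℤ × ℤ)} {y : ℤ × ℤ} (hy : y ∈ V) : dPathIn n V y y = 0 := by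
  have hγ : PathIn V y y [y] := ⟨⟨by simp, List.isChain_singleton _⟩, by simpa using hy, rfl, rfl⟩
  refine le_antisymm ((iInf₂_le [y] hγ).trans ?_) zero_le
  have : sitePt n '' {v | v ∈ [y]} = {sitePt n y} := by
    ext w; simp [eq_comm]
  rw [this]
  exact (Metric.ediam_singleton).le

/-- The number of centres that suffices when no bad event occurs: the first summand serves the
coarse lattices `n < 3 * M`, where all sites are taken. -/
def coverBound (M k : ℕ) : ℕ :=
  (3 * M) * (3 * M) +
    (((Finset.Icc 0 (2 * M : ℤ) ×ˢ Finset.Icc 0 (2 * M : ℤ)) ×ˢ Ix (2 * M)).card * k + 1)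

lemma cover_of_not_Bad {M k n : ℕ} {δ : ℝ} (hM : 0 < M) (hδ : 0 < δ) (hMδ : 36 / (M : ℝ) < δ)
    {ω : ℤ × ℤ → Bool} (hω : 3 * M ≤ n → ¬ Bad M k n ω) {Q : Set (ℝ × ℝ)}
    (hQ : IsDyadicDomain Q) {b : Bool} (x : ℤ × ℤ) :
    ∃ T : Finset (ℤ × ℤ), T.card ≤ coverBound M k ∧
      (∀ z ∈ T, Conn (coloured ω b (lamQ n Q)) x z) ∧
      ∀ y : ℤ × ℤ, Conn (coloured ω b (lamQ n Q)) x y →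
        ∃ z ∈ T, dPathIn n (coloured ω b (lamQ n Q)) z y < ENNReal.ofReal δ := by
  simp only [conn_iff_rch]
  have hV : coloured ω b (lamQ n Q) ⊆ lam n := fun v hv => lamQ_subset n hQ hv.1
  have hF : coloured ω b (lamQ n Q) ⊆ (ofCol n b ω : Set (ℤ × ℤ)) := by
    intro v hv
    exact Finset.mem_coe.2 (Finset.mem_filter.2 ⟨mem_lamF.2 (hV hv), hv.2⟩)
  set V := coloured ω b (lamQ n Q)
  rcases lt_or_ge n (3 * M) with hn | hn
  · refine ⟨(lamF n).filter (fun z => Rch V x z), ?_, fun z hz => (Finset.mem_filter.1 hz).2, ?_⟩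
    · calc _ ≤ (lamF n).card := Finset.card_filter_le _ _
        _ = n * n := card_lamF n
        _ ≤ (3 * M) * (3 * M) := Nat.mul_le_mul hn.le hn.le
        _ ≤ coverBound M k := Nat.le_add_right _ _
    · intro y hy
      refine ⟨y, Finset.mem_filter.2 ⟨mem_lamF.2 (hV hy.right), hy⟩, ?_⟩
      rw [dPathIn_self hy.right]
      exact ENNReal.ofReal_pos.2 hδ
  · have h3 : 3 ≤ n / M := (Nat.le_div_iff_mul_le hM).2 hn
    have hlt : n < (n / M + 1) * M := (Nat.div_lt_iff_lt_mul hM).1 (Nat.lt_succ_self _)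
    have hnL : (n : ℤ) ≤ (2 * M : ℤ) * ((n / M : ℕ) : ℤ) := by
      have : n ≤ 2 * M * (n / M) := by nlinarith
      exact_mod_cast this
    have hk : ∀ ix ∈ Ix (2 * M : ℤ), ¬ DisjOcc
        (fun S => Quad ((n / M : ℕ) : ℤ) ix (S : Set (ℤ × ℤ))) k (ofCol n b ω) := by
      intro ix hix hocc
      exact hω hn ⟨(b, ix), Finset.mem_product.2 ⟨Finset.mem_univ _, hix⟩, hocc⟩
    obtain ⟨T, hT, hTx, hTy⟩ := exists_cover (h := ((n / M : ℕ) : ℤ)) (L := 2 * M)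
      (by omega) hV hnL hF hk x
    refine ⟨T, hT.trans (Nat.le_add_left _ _), hTx, fun y hy => ?_⟩
    obtain ⟨z, hz, hzy⟩ := hTy y hy
    refine ⟨z, hz, (dPathIn_le_of_Loc (M := (M : ℤ)) (by omega) (by omega) ?_ hzy).trans_lt ?_⟩
    · exact_mod_cast Nat.div_mul_le_self n M
    · rw [Int.cast_natCast]
      exact (ENNReal.ofReal_lt_ofReal_iff hδ).2 hMδ

/-- **uniform total boundedness of clusters in the path
metric.** For every `ε > 0` there exists a function `N' : (0,∞) → ℕ` such
that for all `n`, with probability greater than `1 - ε`: for all `δ > 0`,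
all `Q ∈ 𝒬` and every (open or closed) cluster of `Λ_{Q,n}`, the cluster can
be covered by at most `N'(δ)` balls of radius `δ` of the path metric
`d^path_{Q,n}` (equivalently, `N^p_n(δ,m,Q) ≤ N'(δ)` for every `m`). -/
theorem path_metric_total_boundedness :
    ∀ ε : ℝ, 0 < ε → ∃ N' : ℝ → ℕ, ∀ n : ℕ,
      1 - ε < pr n (fun ω => ∀ δ : ℝ, 0 < δ → ∀ Q : Set (ℝ × ℝ),
        IsDyadicDomain Q → ∀ b : Bool, ∀ x : ℤ × ℤ, x ∈ lamQ n Q → ω x = b →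
          ∃ T : Finset (ℤ × ℤ), T.card ≤ N' δ ∧
            (∀ z ∈ T, Conn (coloured ω b (lamQ n Q)) x z) ∧
            ∀ y : ℤ × ℤ, Conn (coloured ω b (lamQ n Q)) x y →
              ∃ z ∈ T, dPathIn n (coloured ω b (lamQ n Q)) z y <
                ENNReal.ofReal δ) := by
  intro ε hε
  choose k hk using fun j : ℕ =>
    exists_pr_Bad_le (36 * (j + 1)) (η := ε / 4 * (1 / 2) ^ j) (by positivity)
  -- the scale used for `δ` is the `j` with `1 / (j + 1) < δ` given by the ceiling of `1 / δ`
  refine ⟨fun δ => coverBound (36 * (⌈1 / δ⌉₊ + 1)) (k ⌈1 / δ⌉₊), fun n => ?_⟩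
  -- only finitely many scales are relevant, since `n < 3 * M` is handled without probability
  set s : Finset ℕ := (Finset.range n).filter (fun j => 3 * (36 * (j + 1)) ≤ n) with hs
  have hbad : pr n (fun ω => ∃ j ∈ s, Bad (36 * (j + 1)) (k j) n ω) < ε := by
    calc _ ≤ ∑ j ∈ s, pr n (Bad (36 * (j + 1)) (k j) n) := pr_exists_le n s _
      _ ≤ ∑ j ∈ s, ε / 4 * (1 / 2) ^ j :=
          Finset.sum_le_sum fun j hj => hk j n (Finset.mem_filter.1 hj).2 (by omega)
      _ ≤ ∑ j ∈ Finset.range n, ε / 4 * (1 / 2) ^ j :=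
          Finset.sum_le_sum_of_subset_of_nonneg (Finset.filter_subset _ _)
            fun _ _ _ => by positivity
      _ = ε / 4 * ∑ j ∈ Finset.range n, (1 / 2 : ℝ) ^ j := by rw [Finset.mul_sum]
      _ ≤ ε / 4 * 2 := by gcongr; exact sum_geometric_two_le n
      _ < ε := by linarith
  have hgood := pr_not n (fun ω => ∃ j ∈ s, Bad (36 * (j + 1)) (k j) n ω)
  refine lt_of_lt_of_le (by linarith) (hgood.ge.trans (pr_mono ?_))
  intro ω hω δ hδ Q hQ b x _ _
  refine cover_of_not_Bad (by omega) hδ ?_ ?_ hQ x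
  · have h1 : 1 / δ < (⌈1 / δ⌉₊ : ℝ) + 1 := (Nat.le_ceil _).trans_lt (lt_add_one _)
    rw [div_lt_iff₀ hδ] at h1
    push_cast
    rw [div_lt_iff₀ (by positivity)]
    linarith
  · intro hn hB
    exact hω ⟨_, Finset.mem_filter.2 ⟨Finset.mem_range.2 (by omega), hn⟩, hB⟩

end Perco
end
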